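/- arXiv:1203.3735 — 4 statements merged into one kernel-verified Lean document; each statement's English description precedes it below -/
import Mathlib

section
/- For every n ≥ 1 there is a constant C_n > 0 such that: for every finite set 𝔊 of S points in ℝⁿ and every real number d > 1, there exists a nonzero polynomial p ∈ ℝ[x₁,…,xₙ] of total degree at most d such that every connected component of ℝⁿ ∖ Z(p) contains at most C_n · S / dⁿ points of 𝔊, where Z(p) = {x ∈ ℝⁿ : p(x) = 0}. -/
/-!
The partitioning polynomial is a product of low-degree factors, each cutting a fixed proportion of
the cells that are still too large. A weak, averaged form of the polynomial ham sandwich theorem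
produces the factors, and it has an elementary proof that avoids the Borsuk–Ulam theorem.

**Separation lemma** (`separating`). Let `M` families of `s` vectors in `ℝ ^ D` be given, with
`D + 1 ≥ 4 * M`. Then some `p ≠ 0` satisfies `p(a) * p(b) ≤ 0` for at least a quarter of all pairs
`(a, b)` of vectors from a common family. To see this, draw `D + 1` random vectors. If they are in
general position, they satisfy a unique linear relation `∑ l j • v j = 0`, with nonzero
coefficients. The functional `p` annihilating all of them except `v j` and `v j'` satisfies
`l j * p(v j) + l j' * p(v j') = 0`, so it separates `v j` from `v j'` whenever `l j` and `l j'` have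
the same sign. By pigeonhole, many pairs of slots have the same family and the same sign. Since `p`
is determined by the other `D - 1` vectors, it can be fixed before `v j` and `v j'` are drawn, and
averaging yields one `p` that works for many pairs. Vectors that are not in general position are
handled by perturbation along the moment curve and compactness (`eventually_generic`).

**Iteration.** Suppose every cell has at most `t` points, and call a cell big if it has more than
`t / 2`. A big cell contains at most one big cell of a refinement, so by the separation lemma,
applied to the monomials, multiplying by a suitable factor reduces the number `b` of points in big
cells by a fixed proportion. There are at most `2 * b / t` big cells, so that factor has degree
`O((b / t) ^ (1 / n))` (`step`). These degrees decay geometrically, so replacing `t` by `t / 2`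
costs degree `O((S / t) ^ (1 / n))`, where `S` is the total number of points (`phase`). Summing over
`t = S, S / 2, …, S / 2 ^ (m - 1)` is again a geometric series, of order `2 ^ (m / n)` (`dyadic`).
-/

open Function Finset Filter Topology

/-! ### Counting -/

/-- The collision bound: a map to few values identifies many ordered pairs (including equal ones). -/
lemma pairs_count {J K : Type*} [Fintype J] [Fintype K] [DecidableEq K] (c : J → K) :
    (Fintype.card J) ^ 2 ≤
      Fintype.card K * #{p : J × J | c p.1 = c p.2} := by
  have h1 : Fintype.card J = ∑ k : K, #{j : J | c j = k} := by
    rw [← Finset.card_univ]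
    exact Finset.card_eq_sum_card_fiberwise (fun _ _ => Finset.mem_coe.2 (mem_univ _))
  have h2 : #{p : J × J | c p.1 = c p.2} = ∑ k : K, (#{j : J | c j = k}) ^ 2 := by
    rw [Finset.card_eq_sum_card_fiberwise (f := fun p : J × J => c p.1) (t := univ)
      (fun _ _ => Finset.mem_coe.2 (mem_univ _))]
    refine Finset.sum_congr rfl fun k _ => ?_
    rw [sq, ← Finset.card_product]
    congr 1
    ext ⟨a, b⟩
    simp only [mem_filter, mem_univ, true_and, mem_product]
    grind
  rw [h1, h2, ← Finset.card_univ (α := K)]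
  exact sq_sum_le_card_mul_sum_sq

/-- Resampling one coordinate of a uniformly random function does not change averages. -/
lemma sum_update {J X : Type*} [Fintype J] [DecidableEq J] [Fintype X]
    (j : J) (h : (J → X) → ℝ) :
    ∑ x : J → X, ∑ a : X, h (update x j a) = Fintype.card X * ∑ x : J → X, h x := by
  classical
  have hinv : Involutive (fun q : (J → X) × X => (update q.1 j q.2, q.1 j)) := by
    rintro ⟨x, a⟩
    simp
  rw [← Fintype.sum_prod_type' (f := fun x a => h (update x j a))]
  have := Equiv.sum_comp hinv.toPerm (fun q : (J → X) × X => h q.1)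
  simp only [Involutive.coe_toPerm] at this
  rw [this, Fintype.sum_prod_type]
  simp [Finset.mul_sum]

/-! ### Separating pairs of vectors by hyperplanes -/

/-- `D + 1` vectors in `ℝ ^ D`, any `D` of them independent, satisfy a linear relation with nonzero
coefficients, and `σ` records the signs of these coefficients. A functional annihilating all but two
of the vectors has opposite signs on these two whenever their coefficients have equal signs. -/
lemma exists_signs {D : ℕ} (v : Fin (D + 1) → Fin D → ℝ)
    (hv : ∀ j : Fin (D + 1), (Matrix.of fun k : Fin D => v (j.succAbove k)).det ≠ 0) :
    ∃ σ : Fin (D + 1) → Bool, ∀ j j', j ≠ j' → ∀ p : Fin D → ℝ,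
      (∀ k, k ≠ j → k ≠ j' → p ⬝ᵥ v k = 0) → σ j = σ j' →
        (p ⬝ᵥ v j) * (p ⬝ᵥ v j') ≤ 0 := by
  obtain ⟨l, hl, hl0⟩ : ∃ l : Fin (D + 1) → ℝ, ∑ j, l j • v j = 0 ∧ l ≠ 0 := by
    have : ¬ LinearIndependent ℝ v := fun h => by
      have := h.fintype_card_le_finrank
      simp at this
    rw [Fintype.not_linearIndependent_iff] at this
    obtain ⟨g, hg, i, hi⟩ := this
    exact ⟨g, hg, fun h => hi (by simp [h])⟩
  have hne : ∀ j, l j ≠ 0 := by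
    intro j hj
    rw [Fin.sum_univ_succAbove _ j, hj, zero_smul, zero_add] at hl
    have h0 := Matrix.eq_zero_of_vecMul_eq_zero (hv j) (v := fun k => l (j.succAbove k)) (by
      rw [← hl]
      ext i
      simp [Matrix.vecMul, dotProduct])
    apply hl0
    ext k
    rcases Fin.eq_self_or_eq_succAbove j k with rfl | ⟨k', rfl⟩
    · exact hj
    · exact congrFun h0 k'
  refine ⟨fun j => decide (0 < l j), fun j j' hjj p hp hσ => ?_⟩
  have hsum : l j * (p ⬝ᵥ v j) + l j' * (p ⬝ᵥ v j') = 0 := by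
    have h := congrArg (fun z => p ⬝ᵥ z) hl
    simp only [dotProduct_sum, dotProduct_smul, dotProduct_zero, smul_eq_mul] at h
    rw [← h, ← Finset.sum_pair hjj (f := fun k => l k * (p ⬝ᵥ v k))]
    refine Finset.sum_subset (subset_univ _) fun k _ hk => ?_
    simp only [mem_insert, mem_singleton, not_or] at hk
    rw [hp k hk.1 hk.2, mul_zero]
  have hs : 0 < l j * l j' := by
    simp only [decide_eq_decide] at hσ
    rcases (hne j).lt_or_gt with h | h
    · have : l j' < 0 := lt_of_le_of_ne (not_lt.1 fun h' => by linarith [hσ.2 h']) (hne j')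
      exact mul_pos_of_neg_of_neg h this
    · exact mul_pos h (hσ.1 h)
  by_contra hc
  push Not at hc
  have h1 : 0 < (l j * l j') * ((p ⬝ᵥ v j) * (p ⬝ᵥ v j')) := mul_pos hs hc
  have h2 : l j' * (p ⬝ᵥ v j') = - (l j * (p ⬝ᵥ v j)) := by linarith
  have h3 : (l j * l j') * ((p ⬝ᵥ v j) * (p ⬝ᵥ v j')) = - (l j * (p ⬝ᵥ v j)) ^ 2 := by
    calc _ = (l j * (p ⬝ᵥ v j)) * (l j' * (p ⬝ᵥ v j')) := by ring
      _ = _ := by rw [h2]; ring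
  nlinarith [sq_nonneg (l j * (p ⬝ᵥ v j))]

lemma exists_annihilator {D : ℕ} (v : Fin (D + 1) → Fin D → ℝ) {j j' : Fin (D + 1)} (h : j ≠ j') :
    ∃ p : Fin D → ℝ, p ≠ 0 ∧ ∀ k, k ≠ j → k ≠ j' → p ⬝ᵥ v k = 0 := by
  let F : (Fin D → ℝ) →ₗ[ℝ] ({k : Fin (D + 1) // k ≠ j ∧ k ≠ j'} → ℝ) :=
    LinearMap.pi fun k => (dotProductBilin ℝ ℝ ).flip (v k)
  have hcard : Fintype.card {k : Fin (D + 1) // k ≠ j ∧ k ≠ j'} < D := by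
    have := Fintype.card_subtype (fun k : Fin (D + 1) => k ≠ j ∧ k ≠ j')
    have h2 : ({k : Fin (D + 1) | k ≠ j ∧ k ≠ j'} : Finset _) = (univ.erase j).erase j' := by
      ext k; simp; tauto
    rw [this, h2, Finset.card_erase_of_mem (by simp [h.symm]), Finset.card_erase_of_mem (by simp)]
    have : 2 ≤ D + 1 := by
      by_contra hD
      have : D = 0 := by omega
      subst this
      exact h (Fin.ext (by omega))
    simp
    omega
  have hk := LinearMap.ker_ne_bot_of_finrank_lt (f := F) (by simpa using hcard)
  obtain ⟨p, hp, hp0⟩ := (Submodule.ne_bot_iff _).1 hk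
  refine ⟨p, hp0, fun k h1 h2 => ?_⟩
  have := congrFun (LinearMap.mem_ker.1 hp) ⟨k, h1, h2⟩
  simpa [F] using this
/-- Adding `ε` times points of the moment curve, one for each slot, puts any family of vectors in
general position for all small `ε ≠ 0`: each determinant is a polynomial in `ε` whose top
coefficient is a Vandermonde determinant. -/
lemma eventually_generic {D : ℕ} {X : Type*} [Finite X] (u : X → Fin D → ℝ) :
    ∀ᶠ ε : ℝ in 𝓝[≠] 0, ∀ (x : Fin (D + 1) → X) (j : Fin (D + 1)),
      (Matrix.of fun k : Fin D => u (x (j.succAbove k)) +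
        ε • fun i : Fin D => ((j.succAbove k : ℕ) : ℝ) ^ (i : ℕ)).det ≠ 0 := by
  rw [eventually_all]
  intro x
  rw [eventually_all]
  intro j
  let W : Matrix (Fin D) (Fin D) ℝ :=
    Matrix.vandermonde fun k : Fin D => ((j.succAbove k : ℕ) : ℝ)
  let U : Matrix (Fin D) (Fin D) ℝ := Matrix.of fun k : Fin D => u (x (j.succAbove k))
  have hW : W.det ≠ 0 := by
    rw [Matrix.det_vandermonde_ne_zero_iff]
    intro a b hab
    have hab' : ((j.succAbove a : ℕ) : ℝ) = ((j.succAbove b : ℕ) : ℝ) := hab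
    exact Fin.succAbove_right_injective (Fin.ext (Nat.cast_injective hab'))
  let q : Polynomial ℝ :=
    ((Polynomial.X : Polynomial ℝ) • W.map Polynomial.C + U.map Polynomial.C).det
  have hq : q ≠ 0 := by
    intro h0
    have := Polynomial.coeff_det_X_add_C_card W U
    rw [show ((Polynomial.X : Polynomial ℝ) • W.map Polynomial.C + U.map Polynomial.C).det = 0
      from h0] at this
    exact hW (by simpa using this.symm)
  have hev : ∀ ε : ℝ, q.eval ε = (Matrix.of fun k : Fin D => u (x (j.succAbove k)) +
        ε • fun i : Fin D => ((j.succAbove k : ℕ) : ℝ) ^ (i : ℕ)).det := by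
    intro ε
    rw [← Polynomial.coe_evalRingHom, RingHom.map_det]
    congr 1
    ext a b
    simp [W, U, Matrix.vandermonde_apply, add_comm]
  have hfin : ({z | q.IsRoot z}).Finite := Polynomial.finite_setOfPred_isRoot hq
  have := (hfin.subset Set.sdiff_subset : ({z | q.IsRoot z} \ {0}).Finite).isClosed.isOpen_compl.mem_nhds
    (show (0:ℝ) ∈ ({z | q.IsRoot z} \ {0})ᶜ by simp)
  filter_upwards [nhdsWithin_le_nhds this, self_mem_nhdsWithin] with ε h1 h2
  rw [← hev]
  intro h
  exact h1 ⟨h, h2⟩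

/-- The separation lemma for vectors in general position. Average over all tuples `x` of one point
per slot. In every tuple, by `exists_signs` and `pairs_count`, many pairs of slots carry the same
index in `I` and the same sign, and each such pair is separated by any `p` annihilating the other
`D - 1` vectors. Since `p` does not depend on the points in the two distinguished slots, the
average over these two points alone is large for some choice of slots and `p`. -/
lemma separating_generic {D : ℕ} {I : Type*} [Fintype I] [DecidableEq I] [Nonempty I] {s : ℕ}
    (hs : 0 < s) (hD : 4 * Fintype.card I ≤ D + 1)
    (v : Fin (D + 1) → I × Fin s → Fin D → ℝ)
    (hv : ∀ (x : Fin (D + 1) → I × Fin s) (j : Fin (D + 1)),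
      (Matrix.of fun k : Fin D => v (j.succAbove k) (x (j.succAbove k))).det ≠ 0) :
    ∃ p : Fin D → ℝ, p ≠ 0 ∧ ∃ j j' : Fin (D + 1),
      Fintype.card I * s ^ 2 ≤ 4 * #{q : I × Fin s × Fin s |
        (p ⬝ᵥ v j (q.1, q.2.1)) * (p ⬝ᵥ v j' (q.1, q.2.2)) ≤ 0} := by
  classical
  by_contra H
  push Not at H
  choose σ hσ using fun x : Fin (D + 1) → I × Fin s => exists_signs (fun j => v j (x j)) (hv x)
  let g : (Fin (D + 1) → I × Fin s) → Fin (D + 1) → Fin (D + 1) → ℝ := fun x j j' =>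
    if ((x j).1, σ x j) = ((x j').1, σ x j') then 1 else 0
  set M : ℝ := (Fintype.card I : ℝ) with hM
  set N : ℝ := (D : ℝ) + 1 with hN
  set Y : ℝ := (Fintype.card (Fin (D + 1) → I × Fin s) : ℝ) with hY
  have hMpos : 0 < M := by rw [hM]; exact_mod_cast Fintype.card_pos
  have hspos : (0 : ℝ) < s := by exact_mod_cast hs
  have : Nonempty (Fin s) := ⟨⟨0, hs⟩⟩
  have hYpos : 0 < Y := by rw [hY]; exact_mod_cast Fintype.card_pos
  have hNpos : 0 < N := by positivity
  have hMN : 4 * M ≤ N := by rw [hM, hN]; exact_mod_cast hD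
  -- `g x j j'` indicates that the slots `j` and `j'` of `x` have equal index and equal sign.
  have hlow : ∀ x, N ^ 2 ≤ 2 * M * ∑ j, ∑ j', g x j j' := by
    intro x
    have h := pairs_count (fun j => ((x j).1, σ x j))
    have e : (∑ j, ∑ j', g x j j') =
        ((#{p : Fin (D + 1) × Fin (D + 1) |
          ((x p.1).1, σ x p.1) = ((x p.2).1, σ x p.2)} : ℕ) : ℝ) := by
      rw [← Fintype.sum_prod_type']
      simp only [g, Finset.sum_boole]
    rw [e]
    rw [Fintype.card_prod, Fintype.card_bool, Fintype.card_fin] at h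
    have h' : (((D + 1) ^ 2 : ℕ) : ℝ) ≤ ((_ : ℕ) : ℝ) := Nat.cast_le.2 h
    push_cast at h'
    rw [hN, hM]
    linarith
  have hpair : ∀ j j', j ≠ j' → ∀ x,
      4 * ∑ a, ∑ b, g (update (update x j a) j' b) j j' ≤ M * s ^ 2 := by
    intro j j' hjj x
    obtain ⟨p, hp0, hp⟩ := exists_annihilator (fun k => v k (x k)) hjj
    have hH := H p hp0 j j'
    have hle : ∑ a, ∑ b, g (update (update x j a) j' b) j j' ≤
        ((#{q : I × Fin s × Fin s |
          (p ⬝ᵥ v j (q.1, q.2.1)) * (p ⬝ᵥ v j' (q.1, q.2.2)) ≤ 0} : ℕ) : ℝ) := by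
      rw [← Fintype.sum_prod_type' (f := fun a b => g (update (update x j a) j' b) j j')]
      simp only [g, Finset.sum_boole]
      refine Nat.cast_le.2 (Finset.card_le_card_of_injOn
        (fun z => (z.1.1, z.1.2, z.2.2)) ?_ ?_)
      · rintro ⟨a, b⟩ hab
        simp only [coe_filter, mem_univ, true_and, Set.mem_ofPred_eq, ne_eq, hjj,
          not_false_eq_true, update_of_ne, update_self, Prod.mk.injEq] at hab ⊢
        have h := hσ (update (update x j a) j' b) j j' hjj p (fun k h1 h2 => by
          simp only [update_of_ne h1, update_of_ne h2]
          exact hp k h1 h2) hab.2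
        simp only [ne_eq, hjj, not_false_eq_true, update_of_ne, update_self] at h
        have hb : (a.1, b.2) = b := Prod.ext hab.1 rfl
        rw [hb]
        exact h
      · rintro ⟨a, b⟩ hab ⟨a', b'⟩ hab' heq
        simp only [coe_filter, mem_univ, true_and, Set.mem_ofPred_eq, ne_eq, hjj,
          not_false_eq_true, update_of_ne, update_self, Prod.mk.injEq] at hab hab' heq
        grind
    have hH' : (4 : ℝ) * ((#{q : I × Fin s × Fin s |
          (p ⬝ᵥ v j (q.1, q.2.1)) * (p ⬝ᵥ v j' (q.1, q.2.2)) ≤ 0} : ℕ) : ℝ) ≤ M * s ^ 2 := by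
      rw [hM]; exact_mod_cast hH.le
    linarith
  have hG : ∀ j j', 4 * M * ∑ x, g x j j' ≤ Y + if j = j' then (4 * M - 1) * Y else 0 := by
    intro j j'
    by_cases hjj : j = j'
    · subst hjj
      simp [g, hY]
      ring_nf
      rfl
    · rw [if_neg hjj, add_zero]
      have h1 : ∑ x, ∑ a, ∑ b, g (update (update x j a) j' b) j j' =
          (M * s) * ((M * s) * ∑ x, g x j j') := by
        rw [sum_update j (fun y => ∑ b, g (update y j' b) j j'), sum_update j' (fun y => g y j j')]
        simp [hM]
      have h2 : ∑ x, 4 * ∑ a, ∑ b, g (update (update x j a) j' b) j j' ≤ Y * (M * s ^ 2) := by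
        refine (Finset.sum_le_sum fun x _ => hpair j j' hjj x).trans ?_
        rw [Finset.sum_const, nsmul_eq_mul, Finset.card_univ]
      rw [← Finset.mul_sum, h1] at h2
      have h3 : (M * s ^ 2) * (4 * M * ∑ x, g x j j') ≤ (M * s ^ 2) * Y := by linarith
      exact le_of_mul_le_mul_left h3 (by positivity)
  have htot : Y * N ^ 2 ≤ 2 * M * ∑ j, ∑ j', ∑ x, g x j j' := by
    have h1 : ∑ x : Fin (D + 1) → I × Fin s, N ^ 2 ≤ ∑ x, 2 * M * ∑ j, ∑ j', g x j j' :=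
      Finset.sum_le_sum fun x _ => hlow x
    rw [Finset.sum_const, nsmul_eq_mul, Finset.card_univ, ← Finset.mul_sum] at h1
    rw [Finset.sum_comm] at h1
    simp_rw [Finset.sum_comm (s := (univ : Finset (Fin (D + 1) → I × Fin s)))] at h1
    exact h1
  have hup : 4 * M * ∑ j, ∑ j', ∑ x, g x j j' ≤ N ^ 2 * Y + N * ((4 * M - 1) * Y) := by
    simp_rw [Finset.mul_sum, ← Finset.mul_sum (s := (univ : Finset (Fin (D + 1) → I × Fin s)))]
    refine (Finset.sum_le_sum fun j _ => Finset.sum_le_sum fun j' _ => hG j j').trans ?_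
    simp [Finset.sum_add_distrib, hN]
    ring_nf
    rfl
  have h1 : N * Y * (2 * N) ≤ N * Y * (N + 4 * M - 1) := by linarith
  have h2 := le_of_mul_le_mul_left h1 (by positivity)
  linarith

/-- Among `card I` families of `s` vectors in `ℝ ^ D`, with `D` at least of order `4 * card I`, some
hyperplane weakly separates a quarter of the pairs taken within a family. General vectors are
limits of families in general position; the number of weakly separated pairs is upper
semicontinuous and the normalised functionals range over a compact sphere. -/
lemma separating {D : ℕ} {I : Type*} [Fintype I] [DecidableEq I] [Nonempty I] {s : ℕ}
    (hs : 0 < s) (hD : 4 * Fintype.card I ≤ D + 1) (u : I × Fin s → Fin D → ℝ) :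
    ∃ p : Fin D → ℝ, p ≠ 0 ∧
      Fintype.card I * s ^ 2 ≤ 4 * #{q : I × Fin s × Fin s |
        (p ⬝ᵥ u (q.1, q.2.1)) * (p ⬝ᵥ u (q.1, q.2.2)) ≤ 0} := by
  classical
  let w : Fin (D + 1) → Fin D → ℝ := fun j i => ((j : ℕ) : ℝ) ^ (i : ℕ)
  obtain ⟨e, he0, he⟩ : ∃ e : ℕ → ℝ, Tendsto e atTop (𝓝 0) ∧
      ∀ m, ∀ (x : Fin (D + 1) → I × Fin s) (j : Fin (D + 1)),
      (Matrix.of fun k : Fin D => u (x (j.succAbove k)) + e m • w (j.succAbove k)).det ≠ 0 := by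
    obtain ⟨e, he0, he⟩ := exists_seq_forall_of_frequently (eventually_generic u).frequently
    exact ⟨e, he0.mono_right nhdsWithin_le_nhds, he⟩
  have hstep : ∀ m, ∃ p ∈ Metric.sphere (0 : Fin D → ℝ) 1, ∃ j j' : Fin (D + 1),
      Fintype.card I * s ^ 2 ≤ 4 * #{q : I × Fin s × Fin s |
        (p ⬝ᵥ (u (q.1, q.2.1) + e m • w j)) * (p ⬝ᵥ (u (q.1, q.2.2) + e m • w j')) ≤ 0} := by
    intro m
    obtain ⟨p, hp0, j, j', h⟩ := separating_generic hs hD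
      (fun j a => u a + e m • w j) (he m)
    have hn : 0 < ‖p‖⁻¹ := inv_pos.2 (norm_pos_iff.2 hp0)
    refine ⟨‖p‖⁻¹ • p, ?_, j, j', ?_⟩
    · rw [mem_sphere_zero_iff_norm, norm_smul, norm_inv, norm_norm,
        inv_mul_cancel₀ (norm_ne_zero_iff.2 hp0)]
    · refine h.trans (Nat.mul_le_mul_left _ (Finset.card_le_card fun q hq => ?_))
      simp only [mem_filter, mem_univ, true_and, smul_dotProduct, smul_eq_mul] at hq ⊢
      have := mul_nonpos_of_nonneg_of_nonpos (mul_pos hn hn).le hq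
      linarith
  choose P hP J J' hJ using hstep
  obtain ⟨p, hp, φ, hφ, hlim⟩ := (isCompact_sphere (0 : Fin D → ℝ) 1).tendsto_subseq hP
  refine ⟨p, fun h => by simp [h] at hp, ?_⟩
  have hev : ∀ᶠ m in atTop, ∀ q : I × Fin s × Fin s,
      0 < (p ⬝ᵥ u (q.1, q.2.1)) * (p ⬝ᵥ u (q.1, q.2.2)) → ∀ j j',
      0 < (P (φ m) ⬝ᵥ (u (q.1, q.2.1) + e (φ m) • w j)) *
        (P (φ m) ⬝ᵥ (u (q.1, q.2.2) + e (φ m) • w j')) := by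
    simp only [eventually_all]
    intro q hq j j'
    have hl : ∀ a j, Tendsto (fun m => P (φ m) ⬝ᵥ (u a + e (φ m) • w j)) atTop
        (𝓝 (p ⬝ᵥ u a)) := by
      intro a j
      have hc : Continuous fun z : (Fin D → ℝ) × ℝ => z.1 ⬝ᵥ (u a + z.2 • w j) := by
        unfold dotProduct
        fun_prop
      have := (hc.tendsto (p, 0)).comp
        (hlim.prodMk_nhds (he0.comp hφ.tendsto_atTop))
      simpa [Function.comp_def] using this
    exact ((hl _ j).mul (hl _ j')).eventually (lt_mem_nhds hq)
  obtain ⟨m, hm⟩ := hev.exists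
  refine (hJ (φ m)).trans (Nat.mul_le_mul_left _ (Finset.card_le_card fun q hq => ?_))
  simp only [mem_filter, mem_univ, true_and] at hq ⊢
  by_contra hc
  exact absurd hq (not_le.2 (hm q (not_le.1 hc) _ _))

/-- `separating` applied to the monomials with all exponents at most `k`, of which there are
`(k + 1) ^ n`. -/
lemma exists_poly (n k : ℕ) {I : Type*} [Fintype I] [DecidableEq I] [Nonempty I] {s : ℕ}
    (hs : 0 < s) (hk : 4 * Fintype.card I ≤ (k + 1) ^ n) (f : I → Fin s → Fin n → ℝ) :
    ∃ p : MvPolynomial (Fin n) ℝ, p ≠ 0 ∧ p.totalDegree ≤ n * k ∧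
      Fintype.card I * s ^ 2 ≤ 4 * #{q : I × Fin s × Fin s |
        MvPolynomial.eval (f q.1 q.2.1) p * MvPolynomial.eval (f q.1 q.2.2) p ≤ 0} := by
  classical
  let E : Fin ((k + 1) ^ n) ≃ (Fin n → Fin (k + 1)) :=
    (Fintype.equivFinOfCardEq (by simp)).symm
  let mon : Fin ((k + 1) ^ n) → (Fin n →₀ ℕ) := fun i =>
    Finsupp.equivFunOnFinite.symm fun a => (E i a : ℕ)
  have hmon : Injective mon := by
    intro i i' h
    apply E.injective
    ext a
    exact DFunLike.congr_fun h a
  obtain ⟨c, hc0, hc⟩ := separating (D := (k + 1) ^ n) hs (by omega)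
    (fun a i => (mon i).prod fun b t => f a.1 a.2 b ^ t)
  let p : MvPolynomial (Fin n) ℝ := ∑ i, MvPolynomial.monomial (mon i) (c i)
  have heval : ∀ y, MvPolynomial.eval y p =
      c ⬝ᵥ fun i => (mon i).prod fun b t => y b ^ t := by
    intro y
    simp [p, dotProduct, MvPolynomial.eval_monomial]
  refine ⟨p, ?_, ?_, ?_⟩
  · intro hp
    apply hc0
    ext i
    have := congrArg (MvPolynomial.coeff (mon i)) hp
    simpa [p, MvPolynomial.coeff_sum, MvPolynomial.coeff_monomial, hmon.eq_iff] using this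
  · refine MvPolynomial.totalDegree_finsetSum_le fun i _ => ?_
    refine (MvPolynomial.totalDegree_monomial_le _ _).trans ?_
    rw [Finsupp.sum_fintype _ _ (by simp)]
    refine (Finset.sum_le_card_nsmul univ _ k fun a _ => ?_).trans (by simp)
    exact Nat.le_of_lt_succ (E i a).2
  · simpa only [heval] using hc

/-! ### Cells -/

noncomputable section

open Classical in
/-- The points of `G` lying in the connected component of `y` in the complement of `Z(P)`;
it is empty when `P` vanishes at `y`. -/
def cell {n : ℕ} (G : Finset (Fin n → ℝ)) (P : MvPolynomial (Fin n) ℝ) (y : Fin n → ℝ) :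
    Finset (Fin n → ℝ) :=
  {x ∈ G | x ∈ connectedComponentIn {x : Fin n → ℝ | MvPolynomial.eval x P ≠ 0} y}

/-- The points of `G` whose cell with respect to `P` has more than `t / 2` elements. -/
def big {n : ℕ} (G : Finset (Fin n → ℝ)) (P : MvPolynomial (Fin n) ℝ) (t : ℝ) :
    Finset (Fin n → ℝ) :=
  {y ∈ G | t < 2 * ((cell G P y).card : ℝ)}

end

section Cells

variable {n : ℕ} {G : Finset (Fin n → ℝ)} {P Q : MvPolynomial (Fin n) ℝ} {y z : Fin n → ℝ}

lemma mem_cell : z ∈ cell G P y ↔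
    z ∈ G ∧ z ∈ connectedComponentIn {x : Fin n → ℝ | MvPolynomial.eval x P ≠ 0} y := by
  simp [cell]

lemma cell_subset : cell G P y ⊆ G := fun _ h => (mem_cell.1 h).1

lemma cell_eq_of_mem (h : z ∈ cell G P y) : cell G P z = cell G P y := by
  have := connectedComponentIn_eq (mem_cell.1 h).2
  ext x
  rw [mem_cell, mem_cell, this]

lemma mem_cell_self_of_nonempty (hy : y ∈ G) (h : (cell G P y).Nonempty) : y ∈ cell G P y := by
  obtain ⟨z, hz⟩ := h
  refine mem_cell.2 ⟨hy, mem_connectedComponentIn ?_⟩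
  exact connectedComponentIn_nonempty_iff.1 ⟨z, (mem_cell.1 hz).2⟩

lemma cell_mul_subset : cell G (P * Q) y ⊆ cell G P y := by
  intro x hx
  rw [mem_cell] at hx ⊢
  refine ⟨hx.1, connectedComponentIn_mono y ?_ hx.2⟩
  intro w hw
  have hw' : MvPolynomial.eval w (P * Q) ≠ 0 := hw
  rw [map_mul] at hw'
  exact left_ne_zero_of_mul hw'

/-- Points in the same cell of `P * Q` have the same nonzero sign under the factor `Q`. -/
lemma eval_mul_pos_of_mem_cell (hz : z ∈ cell G (P * Q) y) :
    0 < MvPolynomial.eval y Q * MvPolynomial.eval z Q := by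
  set F : Set (Fin n → ℝ) := {x | MvPolynomial.eval x (P * Q) ≠ 0} with hF
  have hzc := (mem_cell.1 hz).2
  have hyF : y ∈ F := connectedComponentIn_nonempty_iff.1 ⟨z, hzc⟩
  have hyc := mem_connectedComponentIn hyF
  have hne : ∀ w ∈ connectedComponentIn F y, MvPolynomial.eval w Q ≠ 0 := by
    intro w hw
    have hw' : MvPolynomial.eval w (P * Q) ≠ 0 := connectedComponentIn_subset _ _ hw
    rw [map_mul] at hw'
    exact right_ne_zero_of_mul hw'
  have hpre := (isPreconnected_connectedComponentIn (F := F) (x := y)).image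
    (fun w => MvPolynomial.eval w Q) (MvPolynomial.continuous_eval Q).continuousOn
  have hord := hpre.ordConnected
  by_contra hc
  have h0 : (0 : ℝ) ∈ (fun w => MvPolynomial.eval w Q) '' connectedComponentIn F y := by
    rcases mul_nonpos_iff.1 (not_lt.1 hc) with ⟨h1, h2⟩ | ⟨h1, h2⟩
    · exact hord.out ⟨z, hzc, rfl⟩ ⟨y, hyc, rfl⟩ ⟨h2, h1⟩
    · exact hord.out ⟨y, hyc, rfl⟩ ⟨z, hzc, rfl⟩ ⟨h1, h2⟩
  obtain ⟨w, hw, hw0⟩ := h0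
  exact hne w hw hw0

lemma mem_big {t : ℝ} : y ∈ big G P t ↔ y ∈ G ∧ t < 2 * ((cell G P y).card : ℝ) := by
  simp [big]

lemma mem_cell_self_of_mem_big {t : ℝ} (ht : 0 < t) (hy : y ∈ big G P t) : y ∈ cell G P y := by
  obtain ⟨h1, h2⟩ := mem_big.1 hy
  refine mem_cell_self_of_nonempty h1 (Finset.card_pos.1 ?_)
  have : (0 : ℝ) < (cell G P y).card := by linarith
  exact_mod_cast this

lemma cell_subset_big {t : ℝ} (hy : y ∈ big G P t) : cell G P y ⊆ big G P t := by
  intro z hz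
  rw [mem_big, cell_eq_of_mem hz]
  exact ⟨cell_subset hz, (mem_big.1 hy).2⟩

lemma big_mul_subset {t : ℝ} : big G (P * Q) t ⊆ big G P t := by
  intro z hz
  rw [mem_big] at hz ⊢
  refine ⟨hz.1, hz.2.trans_le ?_⟩
  have : ((cell G (P * Q) z).card : ℝ) ≤ (cell G P z).card :=
    Nat.cast_le.2 (Finset.card_le_card cell_mul_subset)
  linarith

/-- A cell `A` of `P` with at most `t` points contains at most one cell of `P * Q` with more than
`t / 2` points, so all points of `A` that remain in big cells have the same sign under `Q`. -/
lemma eval_mul_pos_of_mem_big {t : ℝ} (ht : 0 < t) {A : Finset (Fin n → ℝ)}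
    (hA : (A.card : ℝ) ≤ t) (hyA : cell G P y = A) (hzA : cell G P z = A)
    (hy : y ∈ big G (P * Q) t) (hz : z ∈ big G (P * Q) t) :
    0 < MvPolynomial.eval y Q * MvPolynomial.eval z Q := by
  have h1 : cell G (P * Q) y ⊆ A := hyA ▸ cell_mul_subset
  have h2 : cell G (P * Q) z ⊆ A := hzA ▸ cell_mul_subset
  have hnd : ¬ Disjoint (cell G (P * Q) y) (cell G (P * Q) z) := by
    intro hd
    have hc := Finset.card_le_card (Finset.union_subset h1 h2)
    rw [Finset.card_union_of_disjoint hd] at hc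
    have hc' : ((cell G (P * Q) y).card : ℝ) + (cell G (P * Q) z).card ≤ A.card := by
      exact_mod_cast hc
    linarith [(mem_big.1 hy).2, (mem_big.1 hz).2]
  obtain ⟨x, hxy, hxz⟩ := Finset.not_disjoint_iff.1 hnd
  apply eval_mul_pos_of_mem_cell (G := G) (P := P)
  rw [← cell_eq_of_mem hxy, cell_eq_of_mem hxz]
  exact mem_cell_self_of_mem_big ht hz

end Cells

/-! ### Degree bounds -/

/-- The number of monomials with exponents at most `k` can be made at least `m` while `k` stays
below `m ^ (1 / n)`. -/
lemma exists_root_bound (n : ℕ) (hn : 1 ≤ n) {m : ℕ} (hm : 2 ≤ m) :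
    ∃ k : ℕ, m ≤ (k + 1) ^ n ∧ (k : ℝ) ≤ (m : ℝ) ^ (1 / n : ℝ) := by
  classical
  have hex : ∃ k : ℕ, m ≤ (k + 1) ^ n :=
    ⟨m, (Nat.le_succ m).trans (Nat.le_self_pow (by omega) _)⟩
  refine ⟨Nat.find hex, Nat.find_spec hex, ?_⟩
  have h0 : Nat.find hex ≠ 0 := by
    intro h
    have := Nat.find_spec hex
    rw [h] at this
    simp at this
    omega
  obtain ⟨k, hk⟩ := Nat.exists_eq_succ_of_ne_zero h0
  have hlt := Nat.find_min hex (m := k) (by omega)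
  rw [hk]
  have h2 : (((k + 1 : ℕ) : ℝ)) ^ n ≤ (m : ℝ) := by exact_mod_cast (not_le.1 hlt).le
  rw [one_div]
  calc ((k.succ : ℕ) : ℝ) = ((((k + 1 : ℕ) : ℝ)) ^ n) ^ ((n : ℝ)⁻¹) :=
        (Real.pow_rpow_inv_natCast (by positivity) (by omega)).symm
    _ ≤ _ := Real.rpow_le_rpow (by positivity) h2 (by positivity)

/-- One multiplication: `Q` is obtained by applying `exists_poly` to samples of equal size from the
big cells of `P`, of which there are at most `2 * (big G P t).card / t`. A fixed proportion of the
points in big cells drops out. -/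
lemma step {n : ℕ} (hn : 1 ≤ n) (G : Finset (Fin n → ℝ)) (P : MvPolynomial (Fin n) ℝ) {t : ℝ}
    (ht : 0 < t) (hP : ∀ y, ((cell G P y).card : ℝ) ≤ t) (hne : (big G P t).Nonempty) :
    ∃ Q : MvPolynomial (Fin n) ℝ, Q ≠ 0 ∧
      (Q.totalDegree : ℝ) ≤ n * (8 * ((big G P t).card / t)) ^ (1 / n : ℝ) ∧
      16 * (big G (P * Q) t).card ≤ 15 * (big G P t).card := by
  classical
  let 𝒜 : Finset (Finset (Fin n → ℝ)) := (big G P t).image (cell G P)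
  -- `s` is the least integer above `t / 2`, so every big cell has at least `s` points.
  obtain ⟨s, hs, hst, hsle⟩ : ∃ s : ℕ, 0 < s ∧ t < 2 * s ∧ ∀ a : ℕ, t < 2 * a → s ≤ a := by
    refine ⟨⌊t / 2⌋₊ + 1, Nat.succ_pos _, ?_, fun a ha => ?_⟩
    · have := Nat.lt_floor_add_one (t / 2)
      push_cast
      linarith
    · exact (Nat.floor_lt (by positivity)).2 (by linarith)
  have h𝒜 : ∀ A : 𝒜, s ≤ A.1.card ∧ (A.1.card : ℝ) ≤ t ∧ ∀ z ∈ A.1, cell G P z = A.1 ∧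
      z ∈ big G P t := by
    rintro ⟨A, hA⟩
    obtain ⟨y, hy, rfl⟩ := Finset.mem_image.1 hA
    refine ⟨?_, hP y, fun z hz => ⟨cell_eq_of_mem hz, cell_subset_big hy hz⟩⟩
    exact hsle _ (mem_big.1 hy).2
  have : Nonempty 𝒜 := by
    obtain ⟨y, hy⟩ := hne
    exact ⟨⟨_, Finset.mem_image_of_mem _ hy⟩⟩
  -- `f A` enumerates `s` distinct points of the big cell `A`.
  let f : 𝒜 → Fin s → Fin n → ℝ := fun A i => (A.1.equivFin.symm (Fin.castLE (h𝒜 A).1 i)).1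
  have hfA : ∀ A i, f A i ∈ A.1 := fun A i => (A.1.equivFin.symm _).2
  have hfinj : ∀ A i A' i', f A i = f A' i' → A = A' ∧ i = i' := by
    intro A i A' i' h
    have hA : A = A' := by
      apply Subtype.ext
      rw [← ((h𝒜 A).2.2 _ (hfA A i)).1, ← ((h𝒜 A').2.2 _ (hfA A' i')).1, h]
    subst hA
    refine ⟨rfl, ?_⟩
    have := A.1.equivFin.symm.injective (Subtype.ext h)
    exact Fin.castLE_injective _ this
  set M : ℕ := Fintype.card 𝒜 with hM
  have hMpos : 0 < M := Fintype.card_pos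
  have hMs : M * s ≤ (big G P t).card := by
    have := Finset.card_le_card_of_injOn (s := (univ : Finset (𝒜 × Fin s))) (t := big G P t)
      (fun q => f q.1 q.2) (fun q _ => ((h𝒜 q.1).2.2 _ (hfA _ _)).2) (by
        intro q _ q' _ h
        obtain ⟨h1, h2⟩ := hfinj _ _ _ _ h
        exact Prod.ext h1 h2)
    simpa [hM] using this
  obtain ⟨k, hk1, hk2⟩ := exists_root_bound n hn (m := 4 * M) (by omega)
  obtain ⟨Q, hQ0, hQdeg, hQ⟩ := exists_poly n k (s := s) hs hk1 f
  refine ⟨Q, hQ0, ?_, ?_⟩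
  · have h1 : (Q.totalDegree : ℝ) ≤ n * k := by exact_mod_cast hQdeg
    refine h1.trans (mul_le_mul_of_nonneg_left (hk2.trans ?_) (Nat.cast_nonneg _))
    refine Real.rpow_le_rpow (by positivity) ?_ (by positivity)
    have h2 : (M : ℝ) * s ≤ (big G P t).card := by exact_mod_cast hMs
    have h3 : (M : ℝ) * t ≤ 2 * (big G P t).card := by
      have : (M : ℝ) * t ≤ M * (2 * s) := mul_le_mul_of_nonneg_left hst.le (Nat.cast_nonneg _)
      linarith
    rw [← mul_div_assoc, le_div_iff₀ ht]
    push_cast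
    linarith
  · set B := big G (P * Q) t with hB
    set R := big G P t \ B with hR
    -- The triples in which the point selected by `π` escapes `B` inject into `R × Fin s`.
    have hcount : ∀ (π : 𝒜 × Fin s × Fin s → 𝒜 × Fin s) (ρ : 𝒜 × Fin s × Fin s → Fin s),
        (∀ q q', π q = π q' → ρ q = ρ q' → q = q') →
        #{q : 𝒜 × Fin s × Fin s | f (π q).1 (π q).2 ∉ B} ≤ R.card * s := by
      intro π ρ hπ
      have := Finset.card_le_card_of_injOn
        (s := {q : 𝒜 × Fin s × Fin s | f (π q).1 (π q).2 ∉ B})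
        (t := R ×ˢ (univ : Finset (Fin s)))
        (fun q => (f (π q).1 (π q).2, ρ q)) (fun q hq => by
          simp only [coe_filter, mem_univ, true_and, Set.mem_ofPred_eq] at hq
          simp only [coe_product, Set.mem_prod, mem_coe, mem_univ, and_true, hR, Finset.mem_sdiff]
          exact ⟨((h𝒜 _).2.2 _ (hfA _ _)).2, hq⟩) (by
          intro q _ q' _ h
          have h' := Prod.mk.inj h
          obtain ⟨h1, h2⟩ := hfinj _ _ _ _ h'.1
          exact hπ q q' (Prod.ext h1 h2) h'.2)
      simpa using this
    -- Two points of one cell that both stay in `B` have the same sign, so a separated pair has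
    -- a member outside `B`.
    have hsep : #{q : 𝒜 × Fin s × Fin s |
        MvPolynomial.eval (f q.1 q.2.1) Q * MvPolynomial.eval (f q.1 q.2.2) Q ≤ 0} ≤
        2 * (R.card * s) := by
      rw [two_mul]
      refine le_trans ?_ (add_le_add
        (hcount (fun q => (q.1, q.2.1)) (fun q => q.2.2) (by grind))
        (hcount (fun q => (q.1, q.2.2)) (fun q => q.2.1) (by grind)))
      refine le_trans (Finset.card_le_card ?_) (Finset.card_union_le _ _)
      intro q hq
      simp only [mem_filter, mem_univ, true_and, mem_union] at hq ⊢
      by_contra hc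
      push Not at hc
      have := eval_mul_pos_of_mem_big ht (h𝒜 q.1).2.1 ((h𝒜 q.1).2.2 _ (hfA _ _)).1
        ((h𝒜 q.1).2.2 _ (hfA _ _)).1 hc.1 hc.2
      linarith
    have hMR : M * s ≤ 8 * R.card := by
      refine Nat.le_of_mul_le_mul_right ?_ hs
      calc M * s * s = M * s ^ 2 := by ring
        _ ≤ 4 * (2 * (R.card * s)) := hQ.trans (Nat.mul_le_mul_left _ hsep)
        _ = _ := by ring
    have hbig : (big G P t).card ≤ 2 * s * M := by
      have := Finset.card_le_mul_card_image (f := cell G P) (big G P t) (2 * s) (by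
        intro A hA
        have hA' := h𝒜 ⟨A, hA⟩
        refine le_trans (Finset.card_le_card (t := A) ?_) ?_
        · intro y hy
          simp only [mem_filter] at hy
          rw [← hy.2]
          exact mem_cell_self_of_mem_big ht hy.1
        · have : (A.card : ℝ) ≤ ((2 * s : ℕ) : ℝ) := by
            push_cast
            linarith [hA'.2.1]
          exact_mod_cast this)
      rwa [show ((big G P t).image (cell G P)).card = M by simp [hM, 𝒜]] at this
    have hRB : R.card + B.card = (big G P t).card :=
      Finset.card_sdiff_add_card_eq_card big_mul_subset
    nlinarith

/-- Repeating `step` halves the size bound on the cells. The number of points in big cells decays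
geometrically, hence so do the degrees of the factors, and their sum is comparable to the first
term. -/
lemma phase {n : ℕ} (hn : 1 ≤ n) : ∃ K : ℝ, 0 < K ∧
    ∀ (G : Finset (Fin n → ℝ)) (t : ℝ), 0 < t → ∀ P : MvPolynomial (Fin n) ℝ,
      (∀ y, ((cell G P y).card : ℝ) ≤ t) →
      ∃ Q : MvPolynomial (Fin n) ℝ, Q ≠ 0 ∧
        (Q.totalDegree : ℝ) ≤ K * (G.card / t) ^ (1 / n : ℝ) ∧
        ∀ y, 2 * ((cell G (P * Q) y).card : ℝ) ≤ t := by
  set r : ℝ := 1 / n with hr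
  have hn0 : (0 : ℝ) < n := by exact_mod_cast hn
  have hr0 : 0 < r := by positivity
  set γ : ℝ := (15 / 16 : ℝ) ^ r with hγ
  have hγ1 : γ < 1 := Real.rpow_lt_one (by norm_num) (by norm_num) hr0
  set K : ℝ := n * 8 ^ r / (1 - γ) with hK
  have hKpos : 0 < K := div_pos (by positivity) (by linarith)
  have hKeq : n * 8 ^ r + K * γ = K := by
    have : K * (1 - γ) = n * 8 ^ r := div_mul_cancel₀ _ (by linarith)
    linarith
  refine ⟨K, hKpos, fun G t ht => ?_⟩
  -- The induction hypothesis bounds the degree by the number `b` of points in big cells rather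
  -- than by `G.card`; this is what makes the geometric series close up.
  have main : ∀ (b : ℕ) (P : MvPolynomial (Fin n) ℝ), (big G P t).card = b →
      (∀ y, ((cell G P y).card : ℝ) ≤ t) →
      ∃ Q : MvPolynomial (Fin n) ℝ, Q ≠ 0 ∧ (Q.totalDegree : ℝ) ≤ K * (b / t) ^ r ∧
        ∀ y, 2 * ((cell G (P * Q) y).card : ℝ) ≤ t := by
    intro b
    induction b using Nat.strong_induction_on with
    | _ b ih =>
      intro P hb hP
      rcases (big G P t).eq_empty_or_nonempty with he | hne
      · refine ⟨1, one_ne_zero, by simp; positivity, fun y => ?_⟩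
        rw [mul_one]
        by_contra hc
        push Not at hc
        have hpos : (0 : ℝ) < (cell G P y).card := by linarith
        obtain ⟨z, hz⟩ := Finset.card_pos.1 (by exact_mod_cast hpos : 0 < (cell G P y).card)
        have : z ∈ big G P t := mem_big.2 ⟨cell_subset hz, by rwa [cell_eq_of_mem hz]⟩
        simp [he] at this
      · obtain ⟨Q₁, hQ₁, hd₁, hc₁⟩ := step hn G P ht hP hne
        have hbpos : 0 < b := hb ▸ Finset.card_pos.2 hne
        obtain ⟨Q₂, hQ₂, hd₂, hc₂⟩ := ih _ (by omega) (P * Q₁) rfl fun y =>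
          (Nat.cast_le.2 (Finset.card_le_card cell_mul_subset)).trans (hP y)
        refine ⟨Q₁ * Q₂, mul_ne_zero hQ₁ hQ₂, ?_, fun y => by rw [← mul_assoc]; exact hc₂ y⟩
        have h1 : ((Q₁ * Q₂).totalDegree : ℝ) ≤ Q₁.totalDegree + Q₂.totalDegree := by
          exact_mod_cast MvPolynomial.totalDegree_mul _ _
        have hbt : (0 : ℝ) ≤ b / t := by positivity
        have h2 : (((big G (P * Q₁) t).card : ℝ) / t) ^ r ≤ γ * (b / t) ^ r := by
          rw [hγ, ← Real.mul_rpow (by norm_num) hbt]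
          refine Real.rpow_le_rpow (by positivity) ?_ hr0.le
          rw [← mul_div_assoc]
          refine div_le_div_of_nonneg_right ?_ ht.le
          have : (16 : ℝ) * (big G (P * Q₁) t).card ≤ 15 * b := by
            rw [← hb]; exact_mod_cast hc₁
          linarith
        rw [hb, Real.mul_rpow (by norm_num) hbt] at hd₁
        calc ((Q₁ * Q₂).totalDegree : ℝ)
            ≤ n * (8 ^ r * (b / t) ^ r) + K * (γ * (b / t) ^ r) :=
              h1.trans (add_le_add hd₁ (hd₂.trans (mul_le_mul_of_nonneg_left h2 hKpos.le)))
          _ = (n * 8 ^ r + K * γ) * (b / t) ^ r := by ring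
          _ = K * (b / t) ^ r := by rw [hKeq]
  intro P hP
  obtain ⟨Q, hQ, hd, hc⟩ := main _ P rfl hP
  refine ⟨Q, hQ, hd.trans (mul_le_mul_of_nonneg_left ?_ hKpos.le), hc⟩
  refine Real.rpow_le_rpow (by positivity) (div_le_div_of_nonneg_right ?_ ht.le) hr0.le
  exact Nat.cast_le.2 (Finset.card_le_card (Finset.filter_subset _ _))

/-- Halving the cell size `m` times costs a degree of order `2 ^ (m / n)`, since the degrees of the
successive phases grow geometrically. -/
lemma dyadic {n : ℕ} (hn : 1 ≤ n) : ∃ L : ℝ, 0 < L ∧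
    ∀ (G : Finset (Fin n → ℝ)) (m : ℕ), ∃ P : MvPolynomial (Fin n) ℝ, P ≠ 0 ∧
      (P.totalDegree : ℝ) ≤ L * ((2 : ℝ) ^ m) ^ (1 / n : ℝ) ∧
      ∀ y, ((cell G P y).card : ℝ) ≤ G.card / 2 ^ m := by
  obtain ⟨K, hK, hphase⟩ := phase hn
  set r : ℝ := 1 / n with hr
  have hn0 : (0 : ℝ) < n := by exact_mod_cast hn
  have hr0 : 0 < r := by positivity
  have h2r : 1 < (2 : ℝ) ^ r := Real.one_lt_rpow (by norm_num) hr0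
  set L : ℝ := K / (2 ^ r - 1) with hL
  have hLpos : 0 < L := div_pos hK (by linarith)
  have hLK : L + K = L * 2 ^ r := by
    have : L * (2 ^ r - 1) = K := div_mul_cancel₀ _ (by linarith)
    linarith
  refine ⟨L, hLpos, fun G m => ?_⟩
  rcases G.eq_empty_or_nonempty with rfl | hG
  · refine ⟨1, one_ne_zero, by simp; positivity, fun y => ?_⟩
    simp [cell]
  have hGpos : (0 : ℝ) < G.card := by exact_mod_cast Finset.card_pos.2 hG
  induction m with
  | zero =>
    refine ⟨1, one_ne_zero, by simp; positivity, fun y => ?_⟩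
    simpa using Finset.card_le_card (cell_subset (G := G) (P := 1) (y := y))
  | succ m ih =>
    obtain ⟨P, hP, hd, hc⟩ := ih
    obtain ⟨Q, hQ, hd', hc'⟩ := hphase G (G.card / 2 ^ m) (by positivity) P hc
    refine ⟨P * Q, mul_ne_zero hP hQ, ?_, fun y => ?_⟩
    · have h1 : ((P * Q).totalDegree : ℝ) ≤ P.totalDegree + Q.totalDegree := by
        exact_mod_cast MvPolynomial.totalDegree_mul _ _
      rw [show (G.card : ℝ) / (G.card / 2 ^ m) = 2 ^ m by field_simp] at hd'
      rw [pow_succ, Real.mul_rpow (by positivity) (by norm_num)]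
      calc ((P * Q).totalDegree : ℝ) ≤ (L + K) * ((2 : ℝ) ^ m) ^ r := by linarith
        _ = _ := by rw [hLK]; ring
    · have := hc' y
      rw [pow_succ, ← div_div, le_div_iff₀ (by norm_num)]
      linarith

/-- Guth–Katz polynomial cell decomposition: for every `n ≥ 1` there is `C > 0` such
that for any finite set `𝔊` of points in `ℝⁿ` and any real `d > 1` there is a nonzero
polynomial `p` of total degree at most `d` such that each connected component of
`ℝⁿ ∖ Z(p)` contains at most `C · |𝔊| / dⁿ` points of `𝔊`. -/
theorem polynomial_cell_decomposition (n : ℕ) (hn : 1 ≤ n) :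
    ∃ C : ℝ, 0 < C ∧ ∀ (𝔊 : Finset (Fin n → ℝ)) (d : ℝ), 1 < d →
      ∃ p : MvPolynomial (Fin n) ℝ, p ≠ 0 ∧ (p.totalDegree : ℝ) ≤ d ∧
        ∀ y : Fin n → ℝ, MvPolynomial.eval y p ≠ 0 →
          (((𝔊 : Set (Fin n → ℝ)) ∩
              connectedComponentIn {x : Fin n → ℝ | MvPolynomial.eval x p ≠ 0} y).ncard : ℝ)
            ≤ C * (𝔊.card : ℝ) / d ^ n := by
  obtain ⟨L, hL, hdy⟩ := dyadic hn
  -- `m` below satisfies `2 ^ m ≤ (d / L) ^ n < 2 ^ (m + 1)`; the factor `2` pays for this rounding.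
  refine ⟨2 * L ^ n, by positivity, fun G d hd => ?_⟩
  have hd0 : 0 < d := by linarith
  have hcell : ∀ (p : MvPolynomial (Fin n) ℝ) (y : Fin n → ℝ),
      ((G : Set (Fin n → ℝ)) ∩
        connectedComponentIn {x : Fin n → ℝ | MvPolynomial.eval x p ≠ 0} y).ncard =
      (cell G p y).card := by
    intro p y
    rw [← Set.ncard_coe_finset]
    congr 1
    ext x
    simp [mem_cell]
  simp only [hcell]
  rcases lt_or_ge d L with hdL | hdL
  · refine ⟨1, one_ne_zero, by simpa using hd0.le, fun y _ => ?_⟩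
    have h1 : ((cell G 1 y).card : ℝ) ≤ G.card := Nat.cast_le.2 (Finset.card_le_card cell_subset)
    have h2 : d ^ n ≤ L ^ n := pow_le_pow_left₀ hd0.le hdL.le n
    rw [le_div_iff₀ (by positivity)]
    calc ((cell G 1 y).card : ℝ) * d ^ n ≤ G.card * L ^ n := by gcongr
      _ ≤ 2 * L ^ n * G.card := by
        have : 0 ≤ L ^ n * (G.card : ℝ) := by positivity
        linarith
  · have hX : 1 ≤ (d / L) ^ n := one_le_pow₀ ((one_le_div hL).2 hdL)
    obtain ⟨m, hm1, hm2⟩ := exists_nat_pow_near hX (one_lt_two (α := ℝ))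
    obtain ⟨P, hP, hdeg, hc⟩ := hdy G m
    refine ⟨P, hP, hdeg.trans ?_, fun y _ => (hc y).trans ?_⟩
    · calc L * ((2 : ℝ) ^ m) ^ (1 / n : ℝ) ≤ L * ((d / L) ^ n) ^ (1 / n : ℝ) := by gcongr
        _ = L * (d / L) := by
          rw [one_div, Real.pow_rpow_inv_natCast (by positivity) (by omega)]
        _ = d := by field_simp
    · rw [div_pow, pow_succ, div_lt_iff₀ (by positivity)] at hm2
      rw [div_le_div_iff₀ (by positivity) (by positivity)]
      have := mul_le_mul_of_nonneg_left hm2.le (Nat.cast_nonneg G.card : (0 : ℝ) ≤ G.card)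
      linarith
end

section
/- Let n ≥ 1, d ≥ 1 be integers, let M = binom(d+n, n) − 1, and let S₁, …, S_M be disjoint finite sets of points in ℝⁿ. Then there exists a nonzero polynomial p ∈ ℝ[x₁,…,xₙ] of total degree at most d whose zero set bisects each S_i, i.e., for every i, the set S_i ∩ {x : p(x) > 0} contains at most |S_i|/2 points and the set S_i ∩ {x : p(x) < 0} contains at most |S_i|/2 points. -/
/-!
Evaluation at a point is a linear functional on the `(M + 1)`-dimensional space of polynomials of
degree at most `d`, so the theorem follows from a linear statement (`exists_bisects`): for `M` finite
families of vectors in `ℝ^(M+1)`, of odd sizes `2 * k i + 1`, there is `v ≠ 0` such that for each `i`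
at most `k i` vectors of the `i`-th family have positive product with `v`, and likewise for negative
ones. A set of even size is padded by one zero vector.

No topological theorem of Borsuk–Ulam type is needed: the linear statement is proved by a parity count.
A transversal `a` chooses one vector from each family; in general position its `M` vectors span a
hyperplane, and the side of that hyperplane on which a vector `z` lies is the sign of the determinant
with rows `z` and the chosen vectors. The invariant is the number `par`, modulo 2, of transversals whose
hyperplane bisects every family.

* Crossing (`par_eq_of_cross`): suppose that exactly one set of `M + 1` vectors becomes dependent, say a
  transversal `a` together with a further vector `q₀` of the family `j`. Only `a` and the
  transversal `b`, which replaces `a j` by `q₀`, are affected. At the crossing their hyperplanes coincide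
  (`cof_mul_eq`), and `a` starts or stops being bisecting if and only if `b` does, so the parity
  is unchanged.
* Moving (`exists_move`): if one vector moves along a line with generic direction, each determinant
  is affine in time, and two of them belonging to different sets of `M + 1` vectors never vanish
  simultaneously. So `par` is the same at both ends.
* Base case (`par_base`): for the vectors `e_{i+1} + q e_0` with `q = 0, …, 2 * k i`, a transversal
  bisects if and only if it chooses the median of every family, so there is exactly one.

Moving the vectors one at a time, every configuration is a limit of generic ones with `par = 1`,
and bisecting unit vectors `v` survive in the limit by compactness of the sphere.
-/

namespace HamSandwich
open Filter Topology Function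

/-! ### Topological preliminaries -/

theorem exists_near_forall_ne_zero {m : ℕ} (F : Set ((Fin m → ℝ) →ₗ[ℝ] ℝ)) (hF : F.Finite)
    (h0 : (0 : (Fin m → ℝ) →ₗ[ℝ] ℝ) ∉ F) (y : Fin m → ℝ) {ε : ℝ} (hε : 0 < ε) :
    ∃ z, dist z y < ε ∧ ∀ ψ ∈ F, ψ z ≠ 0 := by
  have hd : Dense (⋂ ψ ∈ F, {z : Fin m → ℝ | ψ z ≠ 0}) := by
    refine dense_biInter_of_isOpen (fun ψ _ => ?_) hF.countable (fun ψ hψ => ?_)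
    · exact isOpen_ne_fun ψ.continuous_of_finiteDimensional continuous_const
    · have : {z : Fin m → ℝ | ψ z ≠ 0} = ((LinearMap.ker ψ : Set (Fin m → ℝ)))ᶜ := by
        ext z; simp
      rw [this, ← interior_eq_empty_iff_dense_compl, ← Set.not_nonempty_iff_eq_empty]
      intro hne
      have := Submodule.eq_top_of_nonempty_interior' _ hne
      rw [LinearMap.ker_eq_top] at this
      exact h0 (this ▸ hψ)
  obtain ⟨z, hz, hzy⟩ := hd.exists_dist_lt y hε
  refine ⟨z, by rwa [dist_comm], fun ψ hψ => ?_⟩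
  simpa using Set.mem_iInter₂.1 hz ψ hψ

/-- A function on `ℝ` which near every point is constant off that point takes equal values at any two
points where it is locally constant. The exceptional points are the crossing times. -/
theorem eq_of_eventually_punctured {α : Type*} (g : ℝ → α)
    (h : ∀ τ, ∃ v, ∀ᶠ s in 𝓝[≠] τ, g s = v) {a b : ℝ}
    (ha : ∀ᶠ s in 𝓝 a, g s = g a) (hb : ∀ᶠ s in 𝓝 b, g s = g b) : g a = g b := by
  choose v hv using h
  have huniq : ∀ τ c, (∀ᶠ s in 𝓝[≠] τ, g s = c) → v τ = c := fun τ c hc => by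
    obtain ⟨s, h1, h2⟩ := ((hv τ).and hc).exists
    exact h1.symm.trans h2
  have hloc : IsLocallyConstant v := by
    rw [IsLocallyConstant.iff_eventually_eq]
    intro τ
    have h1 := eventually_eventually_nhdsWithin.2 (hv τ)
    have h2 : ∀ᶠ t in 𝓝[≠] τ, v t = v τ := by
      filter_upwards [eventually_nhdsWithin_of_forall (fun t ht => ht), h1] with t ht h
      refine huniq t _ ?_
      have hO : ({τ}ᶜ : Set ℝ) ∈ 𝓝 t := isOpen_compl_singleton.mem_nhds ht
      rw [nhdsWithin_eq_nhds.2 hO] at h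
      exact h.filter_mono nhdsWithin_le_nhds
    have := eventually_nhdsWithin_iff.1 h2
    filter_upwards [this] with t ht
    by_cases htt : t = τ
    · rw [htt]
    · exact ht htt
  rw [← huniq a _ (ha.filter_mono nhdsWithin_le_nhds), ← huniq b _ (hb.filter_mono nhdsWithin_le_nhds)]
  exact hloc.apply_eq_of_preconnectedSpace a b

/-! ### Configurations, transversals and the parity -/

variable {M : ℕ} {k : Fin M → ℕ}

/-- Labels of the vectors: the `i`-th family has `2 * k i + 1` members. -/
abbrev Idx (k : Fin M → ℕ) : Type := Σ i, Fin (2 * k i + 1)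

/-- A configuration: a vector of `ℝ^(M+1)` for every label, repetitions allowed. -/
abbrev Config (k : Fin M → ℕ) : Type := Idx k → Fin (M + 1) → ℝ

/-- A choice of one member of each family. -/
abbrev Transversal (k : Fin M → ℕ) : Type := ∀ i, Fin (2 * k i + 1)

/-- The `M + 1` labels consisting of `q`, in position `0`, and the members chosen by `a`. -/
def tup (a : Transversal k) (q : Idx k) : Fin (M + 1) → Idx k :=
  Fin.cons q (fun i => ⟨i, a i⟩)

/-- The determinant whose rows are the vectors with labels `f 0, …, f M`. -/
def D (x : Config k) (f : Fin (M + 1) → Idx k) : ℝ := Matrix.det (Matrix.of fun r => x (f r))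

/-- General position: any `M + 1` vectors with distinct labels are linearly independent. -/
def Generic (x : Config k) : Prop := ∀ f, Injective f → D x f ≠ 0

/-- The side of the hyperplane spanned by the transversal `a` on which the `q`-th vector of the
`i`-th family lies, as an integer `1`, `0` or `-1`. -/
noncomputable def sg (x : Config k) (a : Transversal k) (i : Fin M) (q : Fin (2 * k i + 1)) : ℤ :=
  SignType.sign (D x (tup a ⟨i, q⟩))

/-- The hyperplane spanned by `a` has equally many vectors of each family on its two sides. -/
def Bis (x : Config k) (a : Transversal k) : Prop := ∀ i, ∑ q, sg x a i q = 0

open Classical in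
/-- The parity of the number of bisecting transversals. -/
noncomputable def par (x : Config k) : ZMod 2 := ∑ a, if Bis x a then 1 else 0

theorem tup_zero (a : Transversal k) (q : Idx k) : tup a q 0 = q := rfl
theorem tup_succ (a : Transversal k) (q : Idx k) (i : Fin M) : tup a q i.succ = ⟨i, a i⟩ := rfl

theorem mem_range_tup {a : Transversal k} {q r : Idx k} :
    r ∈ Set.range (tup a q) ↔ r = q ∨ r.2 = a r.1 := by
  rw [tup, Fin.range_cons, Set.mem_insert_iff]
  refine or_congr Iff.rfl ⟨?_, fun h => ⟨r.1, ?_⟩⟩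
  · rintro ⟨i, rfl⟩; rfl
  · obtain ⟨i, s⟩ := r
    exact congrArg (Sigma.mk i) h.symm

theorem tup_injective {a : Transversal k} {i : Fin M} {q : Fin (2 * k i + 1)} (h : q ≠ a i) :
    Injective (tup a ⟨i, q⟩) := by
  rw [tup, Fin.cons_injective_iff]
  refine ⟨?_, fun i j hij => congrArg Sigma.fst hij⟩
  rintro ⟨l, hl⟩
  obtain ⟨rfl, h2⟩ := Sigma.mk.inj hl
  exact h (eq_of_heq h2).symm

theorem D_eq_zero {x : Config k} {f : Fin (M + 1) → Idx k} (hf : ¬ Injective f) : D x f = 0 := by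
  simp only [Injective, not_forall] at hf
  obtain ⟨i, j, h, hij⟩ := hf
  exact Matrix.det_zero_of_row_eq hij (by ext l; simp [h])

theorem D_self (x : Config k) (a : Transversal k) (i : Fin M) : D x (tup a ⟨i, a i⟩) = 0 := by
  refine D_eq_zero fun h => ?_
  have := @h 0 i.succ rfl
  exact absurd this (Fin.succ_ne_zero i).symm

theorem sg_self (x : Config k) (a : Transversal k) (i : Fin M) : sg x a i (a i) = 0 := by
  simp [sg, D_self]

/-- Exchanging `q` with the member of the family `j` chosen by `a` transposes two rows. -/
theorem D_swap (x : Config k) (a : Transversal k) (j : Fin M) (q : Fin (2 * k j + 1)) :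
    D x (tup (update a j q) ⟨j, a j⟩) = - D x (tup a ⟨j, q⟩) := by
  have h : (Matrix.of fun r => x (tup (update a j q) ⟨j, a j⟩ r)) =
      (Matrix.of fun r => x (tup a ⟨j, q⟩ r)).submatrix (Equiv.swap 0 j.succ) id := by
    ext r c
    simp only [Matrix.of_apply, Matrix.submatrix_apply, id]
    refine congrFun (congrArg x ?_) c
    refine Fin.cases ?_ (fun i => ?_) r
    · simp [tup]
    · by_cases hij : i = j
      · subst hij; simp [tup]
      · rw [Equiv.swap_apply_of_ne_of_ne (Fin.succ_ne_zero i) (by simpa using hij)]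
        simp [tup, hij]
  rw [D, h, Matrix.det_permute]
  simp [D, Equiv.Perm.sign_swap (Fin.succ_ne_zero j).symm]

/-- The linear functional `z ↦ det (z, x_{a 0}, …, x_{a (M-1)})`, whose kernel is the hyperplane spanned
by the transversal `a` if its vectors are independent. -/
noncomputable def cof (x : Config k) (a : Transversal k) : (Fin (M + 1) → ℝ) →ₗ[ℝ] ℝ :=
  (Matrix.detRowAlternating (R := ℝ) (n := Fin (M + 1))).toMultilinearMap.toLinearMap
    (Fin.cons 0 (fun i => x ⟨i, a i⟩)) 0

theorem cof_apply (x : Config k) (a : Transversal k) (z : Fin (M + 1) → ℝ) :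
    cof x a z = Matrix.det (Matrix.of (Fin.cons z (fun i => x ⟨i, a i⟩) : Fin (M + 1) → Fin (M + 1) → ℝ)) := by
  change Matrix.det (Matrix.of (update (Fin.cons 0 (fun i => x ⟨i, a i⟩)) 0 z)) = _
  rw [Fin.update_cons_zero]

theorem D_tup (x : Config k) (a : Transversal k) (q : Idx k) : D x (tup a q) = cof x a (x q) := by
  rw [cof_apply, D]
  congr 2
  ext r : 1
  refine Fin.cases ?_ (fun i => ?_) r <;> simp [tup]

/-- A functional `B` that vanishes on the vectors of the transversal is proportional to `cof x a`, provided
that the latter is nonzero. -/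
theorem cof_mul_eq (x : Config k) (a : Transversal k) (B : (Fin (M + 1) → ℝ) →ₗ[ℝ] ℝ)
    (hB : ∀ i, B (x ⟨i, a i⟩) = 0) (u z : Fin (M + 1) → ℝ) :
    cof x a u * B z = cof x a z * B u := by
  have key : ∀ u z, cof x a u ≠ 0 → cof x a u * B z = cof x a z * B u := by
    intro u z hu
    have hu' := hu
    rw [cof_apply] at hu'
    set R := Matrix.of (Fin.cons u (fun i => x ⟨i, a i⟩) : Fin (M + 1) → Fin (M + 1) → ℝ) with hR
    have hz : z = Matrix.vecMul (Matrix.vecMul z R⁻¹) R := by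
      rw [Matrix.vecMul_vecMul, Matrix.nonsing_inv_mul _ (isUnit_iff_ne_zero.2 hu'), Matrix.vecMul_one]
    set c := Matrix.vecMul z R⁻¹
    have hL : ∀ L : (Fin (M + 1) → ℝ) →ₗ[ℝ] ℝ, (∀ i, L (x ⟨i, a i⟩) = 0) → L z = c 0 * L u := by
      intro L hL
      rw [hz, Matrix.vecMul_eq_sum, map_sum, Fin.sum_univ_succ]
      have h0 : R 0 = u := rfl
      have h1 : ∀ i : Fin M, R i.succ = x ⟨i, a i⟩ := fun i => rfl
      simp [h0, h1, hL]
    rw [hL B hB, hL (cof x a) (fun i => ?_)]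
    · ring
    · rw [← D_tup, D_self]
  by_cases hu : cof x a u = 0
  · by_cases hz : cof x a z = 0
    · simp [hu, hz]
    · exact (key z u hz).symm
  · exact key u z hu

/-- If passing from `x₀` to `x₁` changes the side of at most the `q₀`-th vector of the family `j`, which
lies on the hyperplane of `a` at `x₀`, then only the sum over the family `j` changes. -/
theorem sum_sg {x₀ x₁ : Config k} {a : Transversal k} {j : Fin M} {q₀ : Fin (2 * k j + 1)}
    (h0 : D x₀ (tup a ⟨j, q₀⟩) = 0)
    (h : ∀ r : Idx k, r ≠ ⟨j, q₀⟩ → sg x₁ a r.1 r.2 = sg x₀ a r.1 r.2) (i : Fin M) :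
    ∑ q, sg x₁ a i q = ∑ q, sg x₀ a i q + if i = j then sg x₁ a j q₀ else 0 := by
  have hs : sg x₀ a j q₀ = 0 := by simp [sg, h0]
  split_ifs with hij
  · subst hij
    rw [← sub_eq_iff_eq_add', ← Finset.sum_sub_distrib, Finset.sum_eq_single q₀]
    · rw [hs, sub_zero]
    · intro q _ hq
      rw [h ⟨i, q⟩ (by simpa using hq), sub_self]
    · simp
  · rw [add_zero]
    refine Finset.sum_congr rfl fun q _ => h ⟨i, q⟩ ?_
    intro hh
    exact hij (congrArg Sigma.fst hh)

/-- Sides with respect to `a` do not change where the determinant at `x₀` is nonzero; the chosen members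
themselves always lie on the hyperplane. -/
theorem sg_eq_of {x₀ x₁ : Config k}
    (h : ∀ f, Injective f → D x₀ f ≠ 0 → SignType.sign (D x₁ f) = SignType.sign (D x₀ f))
    (a : Transversal k) (r : Idx k) (hr : r.2 ≠ a r.1 → D x₀ (tup a r) ≠ 0) :
    sg x₁ a r.1 r.2 = sg x₀ a r.1 r.2 := by
  by_cases h1 : r.2 = a r.1
  · rw [h1, sg_self, sg_self]
  · rw [sg, sg, h _ (tup_injective h1) (hr h1)]

/-- Invariance of the parity across a crossing `x₀`. The configurations `x₁` and `x₂` are to be thought of as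
close to `x₀`, before and after the crossing: by `h₁` and `h₂` their determinants keep the sign of the
nonzero determinants at `x₀`, and by `h₀` at most one set of `M + 1` vectors is dependent at `x₀`. -/
theorem par_eq_of_cross {x₀ x₁ x₂ : Config k}
    (h₁ : ∀ f, Injective f → D x₀ f ≠ 0 → SignType.sign (D x₁ f) = SignType.sign (D x₀ f))
    (h₂ : ∀ f, Injective f → D x₀ f ≠ 0 → SignType.sign (D x₂ f) = SignType.sign (D x₀ f))
    (g₁ : Generic x₁) (g₂ : Generic x₂)
    (h₀ : ∀ f g, Injective f → Injective g → D x₀ f = 0 → D x₀ g = 0 →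
      Set.range f = Set.range g) : par x₁ = par x₂ := by
  classical
  have bis_of : ∀ a : Transversal k, (∀ r : Idx k, r.2 ≠ a r.1 → D x₀ (tup a r) ≠ 0) →
      (Bis x₁ a ↔ Bis x₂ a) := fun a ha => by
    refine forall_congr' fun i => ?_
    rw [Finset.sum_congr rfl fun q _ => (sg_eq_of h₁ a ⟨i, q⟩ (ha _)).trans
      (sg_eq_of h₂ a ⟨i, q⟩ (ha _)).symm]
  by_cases hall : ∀ a : Transversal k, ∀ r : Idx k, r.2 ≠ a r.1 → D x₀ (tup a r) ≠ 0
  · exact Finset.sum_congr rfl fun a _ => by rw [bis_of a (hall a)]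
  push Not at hall
  obtain ⟨a, ⟨j, q₀⟩, hq, hD⟩ := hall
  dsimp only at hq
  set b := update a j q₀ with hb
  have hbj : b j = q₀ := update_self ..
  have hDb : D x₀ (tup b ⟨j, a j⟩) = 0 := by rw [D_swap, hD, neg_zero]
  have hqb : a j ≠ b j := by rw [hbj]; exact hq.symm
  have hab : a ≠ b := fun h => hqb (congrFun h j)
  -- A transversal with a vanishing determinant lies in the dependent set, hence is `a` or `b`.
  have hother : ∀ c : Transversal k, c ∉ ({a, b} : Finset (Transversal k)) →
      (Bis x₁ c ↔ Bis x₂ c) := by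
    intro c hc
    refine bis_of c fun r hr h0 => hc ?_
    have hrange := h₀ _ _ (tup_injective hr) (tup_injective hq) h0 hD
    have hci : ∀ i, (⟨i, c i⟩ : Idx k) = ⟨j, q₀⟩ ∨ c i = a i := fun i => by
      have : (⟨i, c i⟩ : Idx k) ∈ Set.range (tup c r) := mem_range_tup.2 (Or.inr rfl)
      rw [show tup c r = tup c ⟨r.1, r.2⟩ from rfl, hrange] at this
      exact mem_range_tup.1 this
    have hne : ∀ i, i ≠ j → c i = a i := fun i hi =>
      (hci i).resolve_left fun h => hi (congrArg Sigma.fst h)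
    rw [Finset.mem_insert, Finset.mem_singleton]
    rcases hci j with h | h
    · right
      funext i
      by_cases hi : i = j
      · subst hi
        rw [hbj]; simpa using h
      · rw [hne i hi, hb, update_of_ne hi]
    · left
      funext i
      by_cases hi : i = j
      · subst hi; exact h
      · exact hne i hi
  have hrb : Set.range (tup b ⟨j, a j⟩) = Set.range (tup a ⟨j, q₀⟩) :=
    h₀ _ _ (tup_injective hqb) (tup_injective hq) hDb hD
  have hna : ∀ r : Idx k, r ≠ ⟨j, q₀⟩ → r.2 ≠ a r.1 → D x₀ (tup a r) ≠ 0 := by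
    intro r hr hra h0
    have := h₀ _ _ (tup_injective hra) (tup_injective hq) h0 hD
    have hm : r ∈ Set.range (tup a r) := ⟨0, rfl⟩
    rw [show tup a r = tup a ⟨r.1, r.2⟩ from rfl, this, mem_range_tup] at hm
    exact hm.elim hr hra
  have hnb : ∀ r : Idx k, r ≠ ⟨j, a j⟩ → r.2 ≠ b r.1 → D x₀ (tup b r) ≠ 0 := by
    intro r hr hra h0
    have := h₀ _ _ (tup_injective hra) (tup_injective hqb) h0 hDb
    have hm : r ∈ Set.range (tup b r) := ⟨0, rfl⟩
    rw [show tup b r = tup b ⟨r.1, r.2⟩ from rfl, this, mem_range_tup] at hm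
    exact hm.elim hr hra
  -- At the crossing both transversals span the same hyperplane, with orientations differing by `ε`.
  have hε : ∃ ε : ℤ, (ε = 1 ∨ ε = -1) ∧ ∀ i q, sg x₀ b i q = ε * sg x₀ a i q := by
    have hmul : ∀ r s : Idx k, D x₀ (tup a r) * D x₀ (tup b s) =
        D x₀ (tup a s) * D x₀ (tup b r) := by
      intro r s
      simp only [D_tup]
      refine cof_mul_eq x₀ a (cof x₀ b) (fun i => ?_) _ _
      rw [← D_tup]
      by_cases hi : i = j
      · subst hi; exact hDb
      · refine D_eq_zero fun hinj => ?_
        have : tup b ⟨i, a i⟩ 0 = tup b ⟨i, a i⟩ i.succ := by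
          rw [tup_zero, tup_succ, hb, update_of_ne hi]
        exact absurd (hinj this) (Fin.succ_ne_zero i).symm
    by_cases hex : ∃ r : Idx k, D x₀ (tup a r) ≠ 0
    · obtain ⟨r, hr⟩ := hex
      have hrU : r ∉ Set.range (tup a ⟨j, q₀⟩) := by
        rw [mem_range_tup]
        rintro (h | h)
        · exact hr (h ▸ hD)
        · have := D_self x₀ a r.1
          rw [← h] at this
          exact hr this
      have hrU' := hrU
      rw [← hrb, mem_range_tup, not_or] at hrU'
      have hrb' := hnb r hrU'.1 hrU'.2
      refine ⟨SignType.sign (D x₀ (tup a r)) * SignType.sign (D x₀ (tup b r)), ?_, fun i q => ?_⟩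
      · rcases lt_or_gt_of_ne hr with h1 | h1 <;> rcases lt_or_gt_of_ne hrb' with h2 | h2 <;>
          simp [sign_pos, sign_neg, h1, h2]
      · have := congrArg (fun t : ℝ => (SignType.sign t : ℤ)) (hmul r ⟨i, q⟩)
        simp only [sign_mul, SignType.coe_mul] at this
        rw [sg, sg]
        rcases lt_or_gt_of_ne hr with h1 | h1 
        · simp only [sign_neg h1, SignType.coe_neg_one] at this ⊢
          linarith
        · simp only [sign_pos h1, SignType.coe_one] at this ⊢
          linarith
    · push Not at hex
      refine ⟨1, Or.inl rfl, fun i q => ?_⟩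
      rw [one_mul]
      have ha0 : sg x₀ a i q = 0 := by simp [sg, hex]
      rw [ha0]
      by_contra hne
      have hmem : (⟨i, q⟩ : Idx k) ∉ Set.range (tup b ⟨j, a j⟩) := by
        rw [mem_range_tup]
        rintro (h | h)
        · apply hne
          rw [sg, h, hDb]; simp
        · apply hne
          dsimp only at h
          rw [h, sg_self]
      rw [hrb, mem_range_tup, not_or] at hmem
      exact hna _ hmem.1 hmem.2 (hex _)
  obtain ⟨ε, hε1, hε2⟩ := hε
  have fa : ∀ x, (∀ f, Injective f → D x₀ f ≠ 0 → SignType.sign (D x f) = SignType.sign (D x₀ f)) →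
      ∀ i, ∑ q, sg x a i q = ∑ q, sg x₀ a i q + if i = j then sg x a j q₀ else 0 :=
    fun x hx i => sum_sg hD (fun r hr => sg_eq_of hx a r (hna r hr)) i
  have fb : ∀ x, (∀ f, Injective f → D x₀ f ≠ 0 → SignType.sign (D x f) = SignType.sign (D x₀ f)) →
      ∀ i, ∑ q, sg x b i q = ε * ∑ q, sg x₀ a i q + if i = j then - sg x a j q₀ else 0 := by
    intro x hx i
    rw [sum_sg hDb (fun r hr => sg_eq_of hx b r (hnb r hr)) i, Finset.mul_sum]
    simp only [hε2]
    congr 2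
    rw [sg, D_swap, Left.sign_neg, SignType.coe_neg, sg]
  have hsg : ∀ x, Generic x → sg x a j q₀ = 1 ∨ sg x a j q₀ = -1 := by
    intro x hx
    rcases lt_or_gt_of_ne (hx _ (tup_injective hq)) with h1 | h1 <;> simp [sg, sign_pos, sign_neg, h1]
  -- Near the crossing the two transversals bisect iff `σ` vanishes off `j` and `σ j + s = 0`, respectively
  -- `ε * σ j - s = 0`, where `s = ±1` is the side of `q₀` with respect to `a`.
  set σ : Fin M → ℤ := fun i => ∑ q, sg x₀ a i q with hσ
  have split : ∀ (ε s : ℤ), (ε = 1 ∨ ε = -1) → ((∀ i, ε * σ i + (if i = j then s else 0) = 0) ↔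
      ((∀ i, i ≠ j → σ i = 0) ∧ ε * σ j + s = 0)) := by
    intro ε s hε
    have hε0 : ε ≠ 0 := by rcases hε with h | h <;> simp [h]
    constructor
    · intro h
      refine ⟨fun i hi => ?_, by simpa using h j⟩
      have := h i
      simpa [hi, hε0] using this
    · rintro ⟨h1, h2⟩ i
      by_cases hi : i = j
      · subst hi; simpa using h2
      · simp [hi, h1 i hi]
  have ba : ∀ x, (∀ f, Injective f → D x₀ f ≠ 0 → SignType.sign (D x f) = SignType.sign (D x₀ f)) →
      (Bis x a ↔ ((∀ i, i ≠ j → σ i = 0) ∧ 1 * σ j + sg x a j q₀ = 0)) := by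
    intro x hx
    rw [← split 1 _ (Or.inl rfl), Bis]
    simp only [fa x hx, one_mul, hσ]
  have bb : ∀ x, (∀ f, Injective f → D x₀ f ≠ 0 → SignType.sign (D x f) = SignType.sign (D x₀ f)) →
      (Bis x b ↔ ((∀ i, i ≠ j → σ i = 0) ∧ ε * σ j + - sg x a j q₀ = 0)) := by
    intro x hx
    rw [← split ε _ hε1, Bis]
    simp only [fb x hx, hσ]
  have hpair : ((if Bis x₁ a then 1 else 0) + (if Bis x₁ b then 1 else 0) : ZMod 2) =
      (if Bis x₂ a then 1 else 0) + (if Bis x₂ b then 1 else 0) := by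
    have e1 := ba x₁ h₁
    have e2 := bb x₁ h₁
    have e3 := ba x₂ h₂
    have e4 := bb x₂ h₂
    by_cases hC : ∀ i, i ≠ j → σ i = 0
    · -- For `ε = 1` the two conditions get exchanged when `s` changes sign; for `ε = -1` they coincide.
      rw [and_iff_right hC] at e1 e2 e3 e4
      rw [if_congr e1 rfl rfl, if_congr e2 rfl rfl, if_congr e3 rfl rfl, if_congr e4 rfl rfl]
      rcases hε1 with rfl | rfl <;> rcases hsg x₁ g₁ with e1 | e1 <;>
        rcases hsg x₂ g₂ with e2 | e2 <;> rw [e1, e2] <;>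
        split_ifs <;> first | rfl | (exfalso; omega)
    · rw [if_neg fun h => hC (e1.1 h).1, if_neg fun h => hC (e2.1 h).1,
        if_neg fun h => hC (e3.1 h).1, if_neg fun h => hC (e4.1 h).1]
  rw [par, par, ← Finset.sum_add_sum_compl {a, b}, ← Finset.sum_add_sum_compl {a, b},
    Finset.sum_pair hab, Finset.sum_pair hab, hpair]
  congr 1
  refine Finset.sum_congr rfl fun c hc => ?_
  rw [if_congr (hother c (Finset.mem_compl.1 hc)) rfl rfl]

/-! ### Moving one vector -/

theorem eventually_sign_eq {α : Type*} {l : Filter α} {g : α → ℝ} {c : ℝ}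
    (h : Tendsto g l (𝓝 c)) (hc : c ≠ 0) :
    ∀ᶠ s in l, SignType.sign (g s) = SignType.sign c := by
  rcases lt_or_gt_of_ne hc with h1 | h1
  · filter_upwards [h.eventually_lt_const h1] with s hs
    rw [sign_neg h1, sign_neg hs]
  · filter_upwards [h.eventually_const_lt h1] with s hs
    rw [sign_pos h1, sign_pos hs]

theorem continuous_D (f : Fin (M + 1) → Idx k) : Continuous fun x : Config k => D x f := by
  unfold D
  refine Continuous.matrix_det ?_
  exact continuous_matrix fun i j => by simp only [Matrix.of_apply]; fun_prop

/-- A single vector of a generic configuration can be moved arbitrarily close to any prescribed position,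
keeping the configuration generic and the parity unchanged. -/
theorem exists_move {x : Config k} (hx : Generic x) (p : Idx k) (y : Fin (M + 1) → ℝ)
    {ε : ℝ} (hε : 0 < ε) :
    ∃ w, dist w y < ε ∧ Generic (update x p w) ∧ par (update x p w) = par x := by
  classical
  -- `Φ (f, l)` is the determinant of `f` as a functional of the `l`-th row.
  let Φ : (Fin (M + 1) → Idx k) × Fin (M + 1) → ((Fin (M + 1) → ℝ) →ₗ[ℝ] ℝ) := fun fl =>
    (Matrix.detRowAlternating (R := ℝ) (n := Fin (M + 1))).toMultilinearMap.toLinearMap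
      (x ∘ fl.1) fl.2
  have hΦ : ∀ f l, Injective f → f l = p → ∀ z, D (update x p z) f = Φ (f, l) z := by
    intro f l hf hl z
    change Matrix.det (Matrix.of (update x p z ∘ f)) = Matrix.det (Matrix.of (update (x ∘ f) l z))
    rw [← hl, update_comp_eq_of_injective x hf]
  have hΦx : ∀ f l, Injective f → f l = p → Φ (f, l) (x p) ≠ 0 := by
    intro f l hf hl
    rw [← hΦ f l hf hl, update_eq_self]
    exact hx f hf
  have hoff : ∀ f, p ∉ Set.range f → ∀ z, D (update x p z) f = D x f := by
    intro f hp z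
    unfold D
    congr 2
    funext r
    exact update_of_ne (fun h => hp ⟨r, h⟩) _ _
  -- If the determinants of `f` and `g` vanish simultaneously on the line through `x p` and `w`, then `w` is a
  -- zero of this functional.
  let Ψ : ((Fin (M + 1) → Idx k) × Fin (M + 1)) × ((Fin (M + 1) → Idx k) × Fin (M + 1)) →
    ((Fin (M + 1) → ℝ) →ₗ[ℝ] ℝ) := fun fg => Φ fg.2 (x p) • Φ fg.1 - Φ fg.1 (x p) • Φ fg.2
  have hΨ : ∀ f l g m, Injective f → Injective g → f l = p → g m = p →
      Set.range f ≠ Set.range g → Ψ ((f, l), (g, m)) ≠ 0 := by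
    intro f l g m hf hg hl hm hne h0
    have hnsub : ¬ Set.range g ⊆ Set.range f := by
      intro hsub
      refine hne (Set.eq_of_subset_of_ncard_le hsub ?_ (Set.finite_range f)).symm
      rw [← Set.image_univ, ← Set.image_univ, Set.ncard_image_of_injective _ hf,
        Set.ncard_image_of_injective _ hg]
    -- At a vector of `g` not in `f`, the determinant of `g` has two equal rows and that of `f` does not vanish.
    obtain ⟨_, ⟨n, rfl⟩, hn⟩ := Set.not_subset.1 hnsub
    have hnm : n ≠ m := by
      rintro rfl
      exact hn ⟨l, hl.trans hm.symm⟩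
    have h1 : Φ (g, m) (x (g n)) = 0 := by
      change Matrix.det (Matrix.of (update (x ∘ g) m (x (g n)))) = 0
      exact Matrix.det_zero_of_row_eq hnm (by funext c; simp [hnm])
    have h2 : Φ (f, l) (x (g n)) ≠ 0 := by
      change Matrix.det (Matrix.of (update (x ∘ f) l (x (g n)))) ≠ 0
      rw [← comp_update]
      refine hx (update f l (g n)) fun r s hrs => ?_
      by_cases hr : r = l <;> by_cases hs : s = l
      · rw [hr, hs]
      · rw [hr, update_self, update_of_ne hs] at hrs
        exact absurd ⟨s, hrs.symm⟩ hn
      · rw [hs, update_self, update_of_ne hr] at hrs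
        exact absurd ⟨r, hrs⟩ hn
      · rw [update_of_ne hr, update_of_ne hs] at hrs
        exact hf hrs
    have h3 := congrArg (fun L => L (x (g n))) h0
    simp only [Ψ, LinearMap.sub_apply, LinearMap.smul_apply, smul_eq_mul, h1, mul_zero, sub_zero,
      LinearMap.zero_apply] at h3
    exact (mul_ne_zero (hΦx g m hg hm) h2) h3
  obtain ⟨w, hwy, hw⟩ := exists_near_forall_ne_zero ((Set.range Φ ∪ Set.range Ψ) \ {0})
    (((Set.finite_range Φ).union (Set.finite_range Ψ)).subset Set.sdiff_subset) (by simp) y hε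
  have hwΦ : ∀ f l, Injective f → f l = p → Φ (f, l) w ≠ 0 := fun f l hf hl =>
    hw _ ⟨Or.inl ⟨_, rfl⟩, fun h => hΦx f l hf hl (by rw [Set.mem_singleton_iff.1 h]; rfl)⟩
  have hwΨ : ∀ f l g m, Injective f → Injective g → f l = p → g m = p →
      Set.range f ≠ Set.range g → Ψ ((f, l), (g, m)) w ≠ 0 := fun f l g m hf hg hl hm hne =>
    hw _ ⟨Or.inr ⟨_, rfl⟩, hΨ f l g m hf hg hl hm hne⟩
  have hgen : Generic (update x p w) := by
    intro f hf
    by_cases hp : p ∈ Set.range f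
    · obtain ⟨l, hl⟩ := hp
      rw [hΦ f l hf hl]
      exact hwΦ f l hf hl
    · rw [hoff f hp]
      exact hx f hf
  refine ⟨w, hwy, hgen, ?_⟩
  let X : ℝ → Config k := fun τ => update x p (x p + τ • (w - x p))
  have hX0 : X 0 = x := by simp [X]
  have hX1 : X 1 = update x p w := by simp [X]
  have hXc : Continuous X := by
    refine continuous_const.update p ?_
    fun_prop
  have hXΦ : ∀ τ f l, Injective f → f l = p →
      D (X τ) f = Φ (f, l) (x p) + τ * (Φ (f, l) w - Φ (f, l) (x p)) := by
    intro τ f l hf hl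
    rw [hΦ f l hf hl, map_add, map_smul, map_sub, smul_eq_mul]
  have hsign : ∀ τ f, D (X τ) f ≠ 0 →
      ∀ᶠ s in 𝓝 τ, SignType.sign (D (X s) f) = SignType.sign (D (X τ) f) := fun τ f h =>
    eventually_sign_eq (((continuous_D f).comp hXc).tendsto τ) h
  have hpunct : ∀ τ f, Injective f → ∀ᶠ s in 𝓝[≠] τ, D (X s) f ≠ 0 := by
    intro τ f hf
    by_cases h0 : D (X τ) f = 0
    · have hp : p ∈ Set.range f := by
        by_contra hp
        exact hx f hf ((hoff f hp _).symm.trans h0)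
      obtain ⟨l, hl⟩ := hp
      refine eventually_nhdsWithin_of_forall fun s hs h1 => ?_
      rw [hXΦ _ f l hf hl] at h0 h1
      have h2 : (s - τ) * (Φ (f, l) w - Φ (f, l) (x p)) = 0 := by linarith
      rcases mul_eq_zero.1 h2 with h | h
      · exact hs (sub_eq_zero.1 h)
      · rw [h, mul_zero, add_zero] at h0
        exact hΦx f l hf hl h0
    · exact ((((continuous_D f).comp hXc).tendsto τ).eventually_ne h0).filter_mono
        nhdsWithin_le_nhds
  have hcross : ∀ τ f g, Injective f → Injective g → D (X τ) f = 0 → D (X τ) g = 0 →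
      Set.range f = Set.range g := by
    intro τ f g hf hg h1 h2
    have hpf : p ∈ Set.range f := by
      by_contra hp
      exact hx f hf ((hoff f hp _).symm.trans h1)
    have hpg : p ∈ Set.range g := by
      by_contra hp
      exact hx g hg ((hoff g hp _).symm.trans h2)
    obtain ⟨l, hl⟩ := hpf
    obtain ⟨m, hm⟩ := hpg
    by_contra hne
    rw [hXΦ _ f l hf hl] at h1
    rw [hXΦ _ g m hg hm] at h2
    have hτ : τ ≠ 0 := by
      rintro rfl
      exact hΦx f l hf hl (by linarith)
    have h3 : τ * Ψ ((f, l), (g, m)) w = 0 := by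
      simp only [Ψ, LinearMap.sub_apply, LinearMap.smul_apply, smul_eq_mul]
      linear_combination Φ (g, m) (x p) * h1 - Φ (f, l) (x p) * h2
    exact hwΨ f l g m hf hg hl hm hne ((mul_eq_zero.1 h3).resolve_left hτ)
  have hev : ∀ τ, ∀ᶠ s in 𝓝[≠] τ, (∀ f, Injective f → D (X τ) f ≠ 0 →
      SignType.sign (D (X s) f) = SignType.sign (D (X τ) f)) ∧ Generic (X s) := by
    intro τ
    refine Eventually.and ?_ ?_
    · refine eventually_all.2 fun f => eventually_imp_distrib_left.2 fun _ =>
        eventually_imp_distrib_left.2 fun h => (hsign τ f h).filter_mono nhdsWithin_le_nhds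
    · exact eventually_all.2 fun f => eventually_imp_distrib_left.2 fun hf => hpunct τ f hf
  have hend : ∀ τ, Generic (X τ) → ∀ᶠ s in 𝓝 τ, par (X s) = par (X τ) := by
    intro τ hτ
    have h1 : ∀ᶠ s in 𝓝 τ, (∀ f, Injective f →
        SignType.sign (D (X s) f) = SignType.sign (D (X τ) f)) :=
      eventually_all.2 fun f => eventually_imp_distrib_left.2 fun hf => hsign τ f (hτ f hf)
    filter_upwards [h1] with s hs
    refine par_eq_of_cross (x₀ := X τ) (fun f hf _ => hs f hf) (fun _ _ _ => rfl) ?_ hτ (hcross τ)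
    intro f hf h0
    have := hs f hf
    rw [h0, sign_zero, eq_comm, sign_eq_zero_iff] at this
    exact hτ f hf this
  have := eq_of_eventually_punctured (fun τ => par (X τ)) (a := 1) (b := 0) (fun τ => ?_)
    (hend 1 (by rwa [hX1])) (hend 0 (by rwa [hX0]))
  · simpa only [hX0, hX1] using this
  · obtain ⟨s, hs⟩ := (hev τ).exists
    refine ⟨par (X s), ?_⟩
    filter_upwards [hev τ] with t ht
    exact par_eq_of_cross ht.1 hs.1 ht.2 hs.2 (hcross τ)

/-! ### The base configuration -/

/-- The configuration whose `i`-th family consists of the vectors `e_{i+1} + q e_0` for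
`q = 0, …, 2 * k i`. -/
noncomputable def base (k : Fin M → ℕ) : Config k := fun r =>
  Pi.single r.1.succ 1 + ((r.2 : ℕ) : ℝ) • Pi.single 0 1

theorem D_base (a : Transversal k) (r : Idx k) :
    D (base k) (tup a r) = ((r.2 : ℕ) : ℝ) - ((a r.1 : ℕ) : ℝ) := by
  have h1 : base k r = base k ⟨r.1, a r.1⟩ +
      (((r.2 : ℕ) : ℝ) - ((a r.1 : ℕ) : ℝ)) • Pi.single 0 1 := by
    simp only [base, sub_smul]; abel
  rw [D_tup, h1, map_add, ← D_tup, D_self, map_smul, zero_add, smul_eq_mul]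
  suffices cof (base k) a (Pi.single 0 1) = 1 by rw [this, mul_one]
  rw [cof_apply, Matrix.det_succ_row_zero, Fin.sum_univ_succ, Finset.sum_eq_zero, add_zero]
  · have : (Matrix.of (Fin.cons (Pi.single 0 1) fun i => base k ⟨i, a i⟩ :
        Fin (M + 1) → Fin (M + 1) → ℝ)).submatrix Fin.succ (Fin.succAbove 0) = 1 := by
      ext i j
      simp [base, Pi.single_apply, Matrix.one_apply, eq_comm]
    rw [this]
    simp
  · intro i _
    simp

theorem sum_sign_sub (n : ℕ) (m : Fin (2 * n + 1)) :
    ∑ q : Fin (2 * n + 1), (SignType.sign (((q : ℕ) : ℝ) - ((m : ℕ) : ℝ)) : ℤ) =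
      2 * n - 2 * (m : ℕ) := by
  have h : ∀ q : Fin (2 * n + 1), (SignType.sign (((q : ℕ) : ℝ) - ((m : ℕ) : ℝ)) : ℤ) =
      (if m < q then 1 else 0) - (if q < m then 1 else 0) := by
    intro q
    rcases lt_trichotomy q m with h | h | h
    · have : ((q : ℕ) : ℝ) - ((m : ℕ) : ℝ) < 0 := sub_neg.2 (by exact_mod_cast h)
      simp [sign_neg this, h, h.not_gt]
    · subst h; simp
    · have : 0 < ((q : ℕ) : ℝ) - ((m : ℕ) : ℝ) := sub_pos.2 (by exact_mod_cast h)
      simp [sign_pos this, h, h.not_gt]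
  rw [Finset.sum_congr rfl fun q _ => h q, Finset.sum_sub_distrib, Finset.sum_boole,
    Finset.sum_boole, Finset.filter_lt_eq_Ioi, Finset.filter_gt_eq_Iio, Fin.card_Ioi, Fin.card_Iio]
  have := m.2
  omega

theorem par_base : par (base k) = 1 := by
  classical
  have h : ∀ a : Transversal k, Bis (base k) a ↔ a = fun i => ⟨k i, by omega⟩ := by
    intro a
    simp only [Bis, sg, D_base, sum_sign_sub]
    rw [funext_iff]
    refine forall_congr' fun i => ?_
    rw [Fin.ext_iff]
    dsimp only
    omega
  rw [par, Finset.sum_congr rfl fun a _ => if_congr (h a) rfl rfl]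
  simp

/-- Perturbing the base configuration along the moment curve makes it generic: the determinants become nonzero
polynomials in the perturbation parameter, with Vandermonde determinants as leading coefficients. -/
theorem exists_generic : ∃ x : Config k, Generic x ∧ par x = 1 := by
  classical
  let c : Config k := fun r j => ((Fintype.equivFin (Idx k) r : ℕ) : ℝ) ^ (j : ℕ)
  have hc : Generic c := by
    intro f hf
    have : D c f = (Matrix.vandermonde
      (fun r => ((Fintype.equivFin (Idx k) (f r) : ℕ) : ℝ))).det := rfl
    rw [this, Matrix.det_vandermonde_ne_zero_iff]
    intro r s h
    exact hf ((Fintype.equivFin (Idx k)).injective (Fin.ext (Nat.cast_injective h)))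
  let X : ℝ → Config k := fun t => t • c + base k
  have hXc : Continuous X := by fun_prop
  have hX0 : X 0 = base k := by simp [X]
  have h1 : ∀ f, Injective f → ∀ᶠ t in 𝓝[≠] (0 : ℝ), D (X t) f ≠ 0 := by
    intro f hf
    let A : Matrix (Fin (M + 1)) (Fin (M + 1)) ℝ := Matrix.of fun r => c (f r)
    let B : Matrix (Fin (M + 1)) (Fin (M + 1)) ℝ := Matrix.of fun r => base k (f r)
    let P : Polynomial ℝ :=
      Matrix.det ((Polynomial.X : Polynomial ℝ) • A.map Polynomial.C + B.map Polynomial.C)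
    have hP : P ≠ 0 := by
      intro h0
      have := Polynomial.coeff_det_X_add_C_card A B
      rw [show Matrix.det _ = P from rfl, h0, Polynomial.coeff_zero] at this
      exact hc f hf this.symm
    have hev : ∀ t, P.eval t = D (X t) f := by
      intro t
      rw [← Polynomial.coe_evalRingHom, RingHom.map_det, D]
      congr 1
      ext i j
      simp [A, B, X]
      exact mul_comm _ _
    have hroots : ((P.rootSet ℝ) \ {0})ᶜ ∈ 𝓝 (0 : ℝ) :=
      ((P.rootSet_finite ℝ).subset Set.sdiff_subset).isClosed.isOpen_compl.mem_nhds (by simp)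
    filter_upwards [mem_nhdsWithin_of_mem_nhds hroots, self_mem_nhdsWithin] with t ht' ht0 h0
    refine ht' ⟨?_, ht0⟩
    rw [Polynomial.mem_rootSet]
    exact ⟨hP, by simpa [hev] using h0⟩
  have h2 : ∀ᶠ t in 𝓝 (0 : ℝ), ∀ (a : Transversal k) (r : Idx k), r.2 ≠ a r.1 →
      SignType.sign (D (X t) (tup a r)) = SignType.sign (D (base k) (tup a r)) := by
    refine eventually_all.2 fun a => eventually_all.2 fun r =>
      eventually_imp_distrib_left.2 fun hr => ?_
    have := ((continuous_D (tup a r)).comp hXc).tendsto 0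
    simp only [comp_apply, hX0] at this
    refine eventually_sign_eq this ?_
    rw [D_base, sub_ne_zero]
    intro h
    exact hr (Fin.ext (by exact_mod_cast h))
  obtain ⟨t, ht1, ht2⟩ := ((eventually_all.2 fun f => eventually_imp_distrib_left.2 fun hf =>
    h1 f hf).and (h2.filter_mono nhdsWithin_le_nhds)).exists
  refine ⟨X t, ht1, ?_⟩
  rw [← par_base (k := k)]
  refine Finset.sum_congr rfl fun a _ => if_congr ?_ rfl rfl
  refine forall_congr' fun i => ?_
  rw [Finset.sum_congr rfl fun q _ => ?_]
  by_cases h : q = a i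
  · rw [h, sg_self, sg_self]
  · rw [sg, sg, ht2 a ⟨i, q⟩ h]

/-! ### The linear ham sandwich theorem -/

theorem exists_approx (y : Config k) {ε : ℝ} (hε : 0 < ε) :
    ∃ x : Config k, Generic x ∧ par x = 1 ∧ ∀ p, dist (x p) (y p) < ε := by
  classical
  suffices h : ∀ T : Finset (Idx k), ∃ x : Config k, Generic x ∧ par x = 1 ∧
      ∀ p ∈ T, dist (x p) (y p) < ε by
    obtain ⟨x, h1, h2, h3⟩ := h Finset.univ
    exact ⟨x, h1, h2, fun p => h3 p (Finset.mem_univ p)⟩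
  intro T
  induction T using Finset.induction_on with
  | empty =>
    obtain ⟨x, h1, h2⟩ := exists_generic (k := k)
    exact ⟨x, h1, h2, by simp⟩
  | insert p T _ ih =>
    obtain ⟨x, h1, h2, h3⟩ := ih
    obtain ⟨w, hw1, hw2, hw3⟩ := exists_move h1 p (y p) hε
    refine ⟨update x p w, hw2, hw3.trans h2, fun r hr => ?_⟩
    by_cases hrp : r = p
    · subst hrp; rwa [update_self]
    · rw [update_of_ne hrp]
      exact h3 r ((Finset.mem_insert.1 hr).resolve_left hrp)

/-- The hyperplane orthogonal to `v` has at most `k i` of the `2 * k i + 1` vectors of the `i`-th family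
strictly on each side. -/
def Bisects (y : Config k) (v : Fin (M + 1) → ℝ) : Prop := ∀ i,
  (Finset.univ.filter fun q => 0 < y ⟨i, q⟩ ⬝ᵥ v).card ≤ k i ∧
  (Finset.univ.filter fun q => y ⟨i, q⟩ ⬝ᵥ v < 0).card ≤ k i

theorem exists_bisects_of_par {x : Config k} (hx : Generic x) (h : par x = 1) :
    ∃ v, v ≠ 0 ∧ Bisects x v := by
  classical
  obtain ⟨a, ha⟩ : ∃ a, Bis x a := by
    by_contra hno
    push Not at hno
    rw [par, Finset.sum_eq_zero fun a _ => if_neg (hno a)] at h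
    exact absurd h (by decide)
  -- If all families are singletons, genericity is vacuous and `cof x a` may vanish; then any `v` orthogonal
  -- to the vectors will do.
  by_cases hr : ∃ r : Idx k, r.2 ≠ a r.1
  · obtain ⟨r, hr⟩ := hr
    let v : Fin (M + 1) → ℝ := fun j => cof x a (Pi.single j 1)
    have hv : ∀ z, cof x a z = z ⬝ᵥ v := by
      intro z
      conv_lhs => rw [pi_eq_sum_univ' z]
      simp [dotProduct, v, map_sum]
    refine ⟨v, ?_, fun i => ?_⟩
    · intro h0
      refine hx _ (tup_injective hr) ?_
      change D x (tup a r) = 0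
      rw [D_tup, hv, h0, dotProduct_zero]
    · have h1 := ha i
      have h2 : ∀ q, sg x a i q =
          (if 0 < x ⟨i, q⟩ ⬝ᵥ v then 1 else 0) - (if x ⟨i, q⟩ ⬝ᵥ v < 0 then 1 else 0) := by
        intro q
        rw [sg, D_tup, hv]
        rcases lt_trichotomy (x ⟨i, q⟩ ⬝ᵥ v) 0 with h | h | h
        · simp [sign_neg h, h, h.not_gt]
        · simp [h]
        · simp [sign_pos h, h, h.not_gt]
      rw [Finset.sum_congr rfl fun q _ => h2 q, Finset.sum_sub_distrib, Finset.sum_boole,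
        Finset.sum_boole] at h1
      have h3 : Disjoint (Finset.univ.filter fun q => 0 < x ⟨i, q⟩ ⬝ᵥ v)
          (Finset.univ.filter fun q => x ⟨i, q⟩ ⬝ᵥ v < 0) :=
        Finset.disjoint_filter.2 fun q _ h => h.not_gt
      have h4 := Finset.card_le_univ ((Finset.univ.filter fun q => 0 < x ⟨i, q⟩ ⬝ᵥ v) ∪
          (Finset.univ.filter fun q => x ⟨i, q⟩ ⬝ᵥ v < 0))
      rw [Finset.card_union_of_disjoint h3, Fintype.card_fin] at h4
      omega
  · push Not at hr
    have h0 : cof x a 0 = 0 := map_zero _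
    rw [cof_apply] at h0
    obtain ⟨v, hv, hv0⟩ := Matrix.exists_mulVec_eq_zero_iff.2 h0
    have h1 : ∀ r : Idx k, x r ⬝ᵥ v = 0 := by
      intro r
      have := congrFun hv0 r.1.succ
      have hrr : r = ⟨r.1, a r.1⟩ := congrArg (Sigma.mk r.1) (hr r)
      rw [hrr]
      exact this
    exact ⟨v, hv, fun i => by simp [h1]⟩

theorem Bisects.smul {y : Config k} {v : Fin (M + 1) → ℝ} (h : Bisects y v) {c : ℝ} (hc : 0 < c) :
    Bisects y (c • v) := by
  intro i
  simpa [dotProduct_smul, hc, mul_neg_iff, hc.not_gt, hc.le] using h i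

/-- The linear ham sandwich theorem for finite families of vectors, with no position assumptions. -/
theorem exists_bisects (y : Config k) : ∃ v, v ≠ 0 ∧ Bisects y v := by
  have hx : ∀ n : ℕ, ∃ x : Config k, (∀ p, dist (x p) (y p) < 1 / ((n : ℝ) + 1)) ∧
      ∃ v : Fin (M + 1) → ℝ, v ∈ Metric.sphere (0 : Fin (M + 1) → ℝ) 1 ∧ Bisects x v := by
    intro n
    obtain ⟨x, h1, h2, h3⟩ := exists_approx y (ε := 1 / ((n : ℝ) + 1)) (by positivity)
    obtain ⟨v, hv, hb⟩ := exists_bisects_of_par h1 h2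
    refine ⟨x, h3, ‖v‖⁻¹ • v, ?_, hb.smul (by positivity)⟩
    rw [mem_sphere_zero_iff_norm, norm_smul, norm_inv, norm_norm,
      inv_mul_cancel₀ (norm_ne_zero_iff.2 hv)]
  choose x hxy v hv hb using hx
  obtain ⟨u, hu, φ, hφ, hlim⟩ := (isCompact_sphere (0 : Fin (M + 1) → ℝ) 1).tendsto_subseq hv
  have hxlim : ∀ p, Tendsto (fun n => x (φ n) p) atTop (𝓝 (y p)) := by
    intro p
    have : Tendsto (fun n => x n p) atTop (𝓝 (y p)) := by
      rw [tendsto_iff_dist_tendsto_zero]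
      exact squeeze_zero (fun _ => dist_nonneg) (fun n => (hxy n p).le)
        tendsto_one_div_add_atTop_nhds_zero_nat
    exact this.comp hφ.tendsto_atTop
  have hdot : ∀ p, Tendsto (fun n => x (φ n) p ⬝ᵥ v (φ n)) atTop (𝓝 (y p ⬝ᵥ u)) := by
    intro p
    have hc : Continuous fun z : (Fin (M + 1) → ℝ) × (Fin (M + 1) → ℝ) => z.1 ⬝ᵥ z.2 := by
      fun_prop
    exact (hc.tendsto (y p, u)).comp ((hxlim p).prodMk_nhds hlim)
  refine ⟨u, ?_, ?_⟩
  · rintro rfl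
    simp at hu
  · have h1 : ∀ᶠ n in atTop, ∀ p, (0 < y p ⬝ᵥ u → 0 < x (φ n) p ⬝ᵥ v (φ n)) ∧
        (y p ⬝ᵥ u < 0 → x (φ n) p ⬝ᵥ v (φ n) < 0) := by
      refine eventually_all.2 fun p => Eventually.and ?_ ?_
      · exact eventually_imp_distrib_left.2 fun h => (hdot p).eventually_const_lt h
      · exact eventually_imp_distrib_left.2 fun h => (hdot p).eventually_lt_const h
    obtain ⟨n, hn⟩ := h1.exists
    intro i
    refine ⟨(Finset.card_le_card ?_).trans (hb (φ n) i).1,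
      (Finset.card_le_card ?_).trans (hb (φ n) i).2⟩
    · exact Finset.monotone_filter_right _ fun q _ h => (hn ⟨i, q⟩).1 h
    · exact Finset.monotone_filter_right _ fun q _ h => (hn ⟨i, q⟩).2 h

/-! ### Polynomials -/

theorem exists_monomials (n d m : ℕ) (hm : m = (d + n).choose n) :
    ∃ e : Fin m → (Fin n →₀ ℕ), Injective e ∧ ∀ j, (e j).degree ≤ d := by
  classical
  -- The exponents of degree at most `d` in `n` variables, homogenized by one more variable.
  have hcard : Fintype.card (Sym (Option (Fin n)) d) = m := by
    rw [Sym.card_sym_eq_choose, Fintype.card_option, Fintype.card_fin, hm,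
      show n + 1 + d - 1 = d + n by omega, Nat.choose_symm_add]
  let E := (Fintype.equivFinOfCardEq hcard).symm
  let F : Sym (Option (Fin n)) d → (Fin n →₀ ℕ) := fun s =>
    Finsupp.equivFunOnFinite.symm fun i => (s : Multiset (Option (Fin n))).count (some i)
  have hsum : ∀ s : Sym (Option (Fin n)) d,
      (s : Multiset (Option (Fin n))).count none + (F s).degree = d := by
    intro s
    have h1 := Multiset.sum_count_eq_card (s := Finset.univ) (m := (s : Multiset (Option (Fin n))))
      (fun _ _ => Finset.mem_univ _)
    rw [Fintype.sum_option, Sym.card_coe] at h1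
    rw [Finsupp.degree_eq_sum]
    exact h1
  refine ⟨F ∘ E, Injective.comp ?_ E.injective, fun j => ?_⟩
  · intro s t h
    apply Sym.coe_injective
    refine Multiset.ext.2 fun o => ?_
    cases o with
    | none =>
      have hs := hsum s
      have ht := hsum t
      rw [h] at hs
      omega
    | some i => exact DFunLike.congr_fun h i
  · have := hsum (E j)
    simp only [comp_apply]
    omega

end HamSandwich

open HamSandwich in
/-- Polynomial ham sandwich theorem for finite point sets (Guth–Katz, after
Stone–Tukey): given `M = binom(d+n,n) − 1` disjoint finite sets `S₁, …, S_M` of points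
in `ℝⁿ`, there is a nonzero polynomial of degree at most `d` whose zero set bisects each
`S_i`: at most half of the points of `S_i` lie where `p > 0`, and at most half lie
where `p < 0`. -/
theorem polynomial_ham_sandwich_finite (n d : ℕ) (hn : 1 ≤ n) (hd : 1 ≤ d)
    (M : ℕ) (hM : M = (d + n).choose n - 1)
    (S : Fin M → Finset (Fin n → ℝ))
    (hdisj : ∀ i j : Fin M, i ≠ j → Disjoint (S i) (S j)) :
    ∃ p : MvPolynomial (Fin n) ℝ, p ≠ 0 ∧ p.totalDegree ≤ d ∧
      ∀ i : Fin M,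
        2 * ((S i : Set (Fin n → ℝ)) ∩ {x | 0 < MvPolynomial.eval x p}).ncard ≤ (S i).card ∧
        2 * ((S i : Set (Fin n → ℝ)) ∩ {x | MvPolynomial.eval x p < 0}).ncard ≤ (S i).card := by
  classical
  have hpos : 0 < (d + n).choose n := Nat.choose_pos (by omega)
  obtain ⟨e, he, hed⟩ := exists_monomials n d (M + 1) (by omega)
  let k : Fin M → ℕ := fun i => (S i).card / 2
  let mon : (Fin n → ℝ) → Fin (M + 1) → ℝ := fun s j => MvPolynomial.eval s
    (MvPolynomial.monomial (e j) 1)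
  -- A set of even size is padded by a zero vector.
  let y : Config k := fun r => if h : (r.2 : ℕ) < (S r.1).card then
    mon ((S r.1).equivFin.symm ⟨r.2, h⟩) else 0
  obtain ⟨v, hv, hb⟩ := exists_bisects y
  let p : MvPolynomial (Fin n) ℝ := ∑ j, MvPolynomial.monomial (e j) (v j)
  have hp : ∀ s, MvPolynomial.eval s p = mon s ⬝ᵥ v := by
    intro s
    simp only [p, mon, map_sum, dotProduct, MvPolynomial.eval_monomial, one_mul]
    exact Finset.sum_congr rfl fun j _ => mul_comm _ _
  have hcard : ∀ (i : Fin M) (Q : ℝ → Prop),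
      ((S i : Set (Fin n → ℝ)) ∩ {x | Q (MvPolynomial.eval x p)}).ncard ≤
        (Finset.univ.filter fun q => Q (y ⟨i, q⟩ ⬝ᵥ v)).card := by
    intro i Q
    rw [← Set.ncard_coe_finset]
    let g : (Fin n → ℝ) → Fin (2 * k i + 1) := fun s =>
      if h : s ∈ S i then ⟨(S i).equivFin ⟨s, h⟩, by
        have := ((S i).equivFin ⟨s, h⟩).2
        simp only [k]
        omega⟩ else 0
    refine Set.ncard_le_ncard_of_injOn g ?_ ?_ (Finset.finite_toSet _)
    · rintro s ⟨hs, hQ⟩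
      have hs' : s ∈ S i := hs
      have : y ⟨i, g s⟩ = mon s := by
        simp [y, g, hs']
      simp only [Finset.coe_filter, Finset.mem_univ, true_and, Set.mem_ofPred_eq, this]
      rw [← hp]
      exact hQ
    · rintro s ⟨hs, _⟩ t ⟨ht, _⟩ hst
      have hs' : s ∈ S i := hs
      have ht' : t ∈ S i := ht
      simp only [g, dif_pos hs', dif_pos ht', Fin.mk.injEq] at hst
      exact congrArg Subtype.val ((S i).equivFin.injective (Fin.ext hst))
  refine ⟨p, ?_, ?_, fun i => ⟨?_, ?_⟩⟩
  · intro h0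
    apply hv
    funext j
    have : MvPolynomial.coeff (e j) p = v j := by
      simp only [p, MvPolynomial.coeff_sum, MvPolynomial.coeff_monomial]
      rw [Finset.sum_eq_single j] <;> simp +contextual [he.eq_iff]
    rw [← this, h0]
    rfl
  · refine MvPolynomial.totalDegree_finsetSum_le fun j _ => ?_
    refine (MvPolynomial.totalDegree_monomial_le _ _).trans ?_
    exact hed j
  · have h1 := hcard i (fun t => 0 < t)
    have h2 := (hb i).1
    simp only [k] at h1 h2
    omega
  · have h1 := hcard i (fun t => t < 0)
    have h2 := (hb i).2
    simp only [k] at h1 h2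
    omega
end

section
/- Let p ∈ ℝ[x,y,z] be a nonzero squarefree polynomial of total degree at most d. Then the set of lines ℓ in ℝ³ such that p and all three partial derivatives ∂p/∂x, ∂p/∂y, ∂p/∂z vanish at every point of ℓ (i.e., the set of critical lines of the zero set of p) is finite, of cardinality at most d². -/
/-!
Let `n` be the total degree of `p`. For a direction `w` at which the top-degree part of `p` does not
vanish, `F(x, z) = p(x + z w)` has, up to a nonzero constant, leading term `zⁿ` in `z`. It is
squarefree because it is the image of `p` under the automorphism `x ↦ x + z w` of `ℝ[x][z]`; by
Gauss's lemma it is separable over `ℝ(x)`, so the resultant `D(x)` of `F` and `∂F/∂z` is a nonzero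
polynomial, and a weight count in the Sylvester matrix gives `deg D ≤ n²`
(`totalDegree_resultant_le`). If `x + z w` is a critical point of `p`, then `F(x, ·)` and its
derivative vanish at `z`, so `D(x) = 0` (`exists_resultant`). Hence `D` vanishes on every plane
spanned by a critical line and the direction `w`.

Given finitely many critical lines, choose `w` also outside finitely many planes, so that the planes
obtained from different lines are different. A generic line through a point off the zero set of `D`
meets these planes in distinct points; `D` restricted to it is a nonzero univariate polynomial of
degree at most `n²` that vanishes at all of them (`card_le_of_critical`). So any finite set of
critical lines has at most `n²` elements.
-/

open MvPolynomial

/-- A line in `ℝⁿ`: a set of the form `{a + t • v : t ∈ ℝ}` with `v ≠ 0`. -/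
def IsLine (n : ℕ) (ℓ : Set (Fin n → ℝ)) : Prop :=
  ∃ a v : Fin n → ℝ, v ≠ 0 ∧ ℓ = {p | ∃ t : ℝ, p = a + t • v}

/-- A critical line of the zero set of a squarefree polynomial `p ∈ ℝ[x,y,z]`:
a line at every point of which `p` and all three partial derivatives of `p` vanish. -/
def IsCriticalLine (p : MvPolynomial (Fin 3) ℝ) (ℓ : Set (Fin 3 → ℝ)) : Prop :=
  IsLine 3 ℓ ∧ ∀ x ∈ ℓ, eval x p = 0 ∧ ∀ i : Fin 3, eval x (pderiv i p) = 0

/-! ### Total degree of polynomials in `z` -/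

/-- The total degree in `x₁, x₂, x₃, z` of a polynomial in `z` with coefficients in
`ℝ[x₁, x₂, x₃]` is at most `n`. -/
def WtLE (n : ℕ) (f : Polynomial (MvPolynomial (Fin 3) ℝ)) : Prop :=
  ∀ k, f.coeff k ≠ 0 → (f.coeff k).totalDegree + k ≤ n

lemma WtLE.mono {m n : ℕ} {f} (h : WtLE m f) (hmn : m ≤ n) : WtLE n f :=
  fun k hk => (h k hk).trans hmn

lemma wtLE_zero (n : ℕ) : WtLE n 0 := fun k hk => by simp at hk

lemma wtLE_C (c : ℝ) : WtLE 0 (Polynomial.C (C c)) := by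
  intro k hk
  rw [Polynomial.coeff_C] at hk ⊢
  split_ifs at hk ⊢ with h
  · simp [h]
  · exact absurd rfl hk

lemma WtLE.add {n : ℕ} {f g} (hf : WtLE n f) (hg : WtLE n g) : WtLE n (f + g) := by
  intro k hk
  rw [Polynomial.coeff_add] at hk ⊢
  by_cases h1 : f.coeff k = 0
  · rw [h1, zero_add] at hk ⊢; exact hg k hk
  by_cases h2 : g.coeff k = 0
  · rw [h2, add_zero] at hk ⊢; exact hf k hk
  have := totalDegree_add (f.coeff k) (g.coeff k)
  have := hf k h1
  have := hg k h2
  omega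

lemma WtLE.mul {m n : ℕ} {f g} (hf : WtLE m f) (hg : WtLE n g) : WtLE (m + n) (f * g) := by
  intro k hk
  rw [Polynomial.coeff_mul] at hk ⊢
  obtain ⟨x, hx, hx0⟩ := Finset.exists_ne_zero_of_sum_ne_zero hk
  have key : ∀ y ∈ Finset.HasAntidiagonal.antidiagonal k, f.coeff y.1 * g.coeff y.2 ≠ 0 →
      (f.coeff y.1 * g.coeff y.2).totalDegree + k ≤ m + n := by
    intro y hy hy0
    have h1 := hf _ (left_ne_zero_of_mul hy0)
    have h2 := hg _ (right_ne_zero_of_mul hy0)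
    have h3 := totalDegree_mul (f.coeff y.1) (g.coeff y.2)
    have h4 := Finset.HasAntidiagonal.mem_antidiagonal.1 hy
    omega
  have hkle := key x hx hx0
  have : (∑ y ∈ Finset.HasAntidiagonal.antidiagonal k,
      f.coeff y.1 * g.coeff y.2).totalDegree ≤ m + n - k := by
    refine totalDegree_finsetSum_le fun y hy => ?_
    by_cases hy0 : f.coeff y.1 * g.coeff y.2 = 0
    · simp [hy0]
    · have := key y hy hy0
      omega
  omega

lemma wtLE_one : WtLE 0 1 := by simpa using wtLE_C 1

lemma WtLE.pow {m : ℕ} {f} (hf : WtLE m f) (e : ℕ) : WtLE (e * m) (f ^ e) := by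
  induction e with
  | zero => simpa using wtLE_one
  | succ e ih => rw [pow_succ, Nat.succ_mul]; exact ih.mul hf

lemma WtLE.sum {ι : Type*} {n : ℕ} (s : Finset ι) (f : ι → Polynomial (MvPolynomial (Fin 3) ℝ))
    (h : ∀ i ∈ s, WtLE n (f i)) : WtLE n (∑ i ∈ s, f i) :=
  Finset.sum_induction f (WtLE n) (fun _ _ => WtLE.add) (wtLE_zero n) h

lemma WtLE.derivative {n : ℕ} {f} (hf : WtLE n f) : WtLE n (Polynomial.derivative f) := by
  intro k hk
  rw [Polynomial.coeff_derivative] at hk ⊢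
  have h1 := hf _ (left_ne_zero_of_mul hk)
  have h2 := totalDegree_mul (f.coeff (k + 1)) ((k : MvPolynomial (Fin 3) ℝ) + 1)
  have h3 : ((k : MvPolynomial (Fin 3) ℝ) + 1).totalDegree = 0 := by
    have : ((k : MvPolynomial (Fin 3) ℝ) + 1) = C ((k : ℝ) + 1) := by simp
    rw [this, totalDegree_C]
  omega

lemma WtLE.natDegree_le {n : ℕ} {f} (hf : WtLE n f) : f.natDegree ≤ n := by
  by_cases h : f = 0
  · simp [h]
  · have := hf f.natDegree (by simpa using h)
    omega

/-! ### The polynomial `p(x + z w)` -/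

/-- The polynomial `p(x + z w)`, as a polynomial in `z` with coefficients in `ℝ[x₁, x₂, x₃]`. -/
noncomputable def shiftHom (w : Fin 3 → ℝ) :
    MvPolynomial (Fin 3) ℝ →ₐ[ℝ] Polynomial (MvPolynomial (Fin 3) ℝ) :=
  aeval fun i => Polynomial.C (X i) + Polynomial.C (C (w i)) * Polynomial.X

lemma shiftHom_X (w : Fin 3 → ℝ) (i) : shiftHom w (X i) =
    Polynomial.C (X i) + Polynomial.C (C (w i)) * Polynomial.X := by
  simp [shiftHom]

lemma shiftHom_C (w : Fin 3 → ℝ) (c) : shiftHom w (C c) = Polynomial.C (C c) := by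
  simp [shiftHom]

lemma wtLE_shiftHom (w : Fin 3 → ℝ) (p : MvPolynomial (Fin 3) ℝ) :
    WtLE p.totalDegree (shiftHom w p) := by
  have hlin : ∀ i, WtLE 1 (shiftHom w (X i)) := by
    intro i
    rw [shiftHom_X]
    intro k hk
    rcases k with _ | _ | k
    · simp
    · simp
    · simp [Polynomial.coeff_C_succ] at hk
  conv => rhs; rw [p.as_sum]
  rw [map_sum]
  refine WtLE.sum _ _ fun s hs => ?_
  have hle := le_totalDegree hs
  rw [Finsupp.sum_fintype _ _ (by simp), Fin.sum_univ_three] at hle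
  rw [monomial_eq, Finsupp.prod_fintype _ _ (by simp), Fin.prod_univ_three]
  simp only [map_mul, map_pow, shiftHom_C]
  have := (wtLE_C (coeff s p)).mul
    ((((hlin 0).pow (s 0)).mul ((hlin 1).pow (s 1))).mul ((hlin 2).pow (s 2)))
  exact this.mono (by omega)

/-- The chain rule for `z ↦ p(x + z w)`. -/
lemma derivative_shiftHom (w : Fin 3 → ℝ) (p : MvPolynomial (Fin 3) ℝ) :
    Polynomial.derivative (shiftHom w p) =
      ∑ i, Polynomial.C (C (w i)) * shiftHom w (pderiv i p) := by
  induction p using MvPolynomial.induction_on with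
  | C c => simp
  | add p q hp hq => simp [hp, hq, mul_add, Finset.sum_add_distrib]
  | mul_X p i hp =>
    simp only [map_mul, Polynomial.derivative_mul, hp, Derivation.leibniz, smul_eq_mul, map_add,
      pderiv_X, mul_add, Finset.sum_add_distrib, Finset.sum_mul]
    rw [add_comm]
    refine congrArg₂ (· + ·) ?_ ?_
    · rw [Finset.sum_eq_single i (fun j _ hj => by simp [Pi.single_eq_of_ne hj.symm]) (by simp),
        shiftHom_X, Pi.single_eq_same, map_one, mul_one, mul_comm]
      simp only [map_add, Polynomial.derivative_C, Polynomial.derivative_C_mul,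
        Polynomial.derivative_X, zero_add, mul_one]
    · exact Finset.sum_congr rfl fun j _ => by ring

lemma eval₂_shiftHom (w x : Fin 3 → ℝ) (z : ℝ) (p : MvPolynomial (Fin 3) ℝ) :
    Polynomial.eval₂ (eval x) z (shiftHom w p) = eval (x + z • w) p := by
  induction p using MvPolynomial.induction_on with
  | C c => simp
  | add p q hp hq => simp [hp, hq]
  | mul_X p i hp =>
    rw [map_mul, Polynomial.eval₂_mul, hp, map_mul, shiftHom_X]
    simp only [Polynomial.eval₂_add, Polynomial.eval₂_mul, Polynomial.eval₂_C,
      Polynomial.eval₂_X, eval_X, eval_C, Pi.add_apply, Pi.smul_apply, smul_eq_mul]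
    ring

/-- The endomorphism `x ↦ x + z w`, `z ↦ z` of `ℝ[x₁, x₂, x₃][z]`; its inverse belongs to `-w`. -/
noncomputable def shiftEnd (w : Fin 3 → ℝ) :
    Polynomial (MvPolynomial (Fin 3) ℝ) →+* Polynomial (MvPolynomial (Fin 3) ℝ) :=
  Polynomial.eval₂RingHom (shiftHom w : _ →+* _) Polynomial.X

lemma shiftEnd_C (w : Fin 3 → ℝ) (p) : shiftEnd w (Polynomial.C p) = shiftHom w p := by
  simp [shiftEnd]

lemma shiftEnd_X (w : Fin 3 → ℝ) : shiftEnd w Polynomial.X = Polynomial.X := by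
  simp [shiftEnd]

lemma shiftEnd_shiftHom (w : Fin 3 → ℝ) (p) :
    shiftEnd (-w) (shiftHom w p) = Polynomial.C p := by
  induction p using MvPolynomial.induction_on with
  | C c => simp [shiftEnd_C]
  | add p q hp hq => simp [hp, hq]
  | mul_X p i hp =>
    rw [map_mul, map_mul, hp, shiftHom_X]
    rw [map_add, map_mul, shiftEnd_C, shiftEnd_C, shiftEnd_X, shiftHom_X, shiftHom_C,
      Pi.neg_apply, map_neg, map_neg, map_mul]
    ring

lemma shiftEnd_shiftEnd (w : Fin 3 → ℝ) (f) : shiftEnd w (shiftEnd (-w) f) = f := by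
  induction f using Polynomial.induction_on' with
  | add f g hf hg => simp [hf, hg]
  | monomial n a =>
    rw [← Polynomial.C_mul_X_pow_eq_monomial]
    have := shiftEnd_shiftHom (-w) a
    rw [neg_neg] at this
    simp [shiftEnd_C, shiftEnd_X, this]

/-- An automorphism of `ℝ[x₁, x₂, x₃][z]` carries the constant polynomial `p` to `p(x + z w)`. -/
lemma squarefree_shiftHom (w : Fin 3 → ℝ) {p : MvPolynomial (Fin 3) ℝ} (hp : p ≠ 0)
    (hsf : Squarefree p) : Squarefree (shiftHom w p) := by
  intro g hg
  have h1 := map_dvd (shiftEnd (-w)) hg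
  rw [shiftEnd_shiftHom, map_mul] at h1
  set h := shiftEnd (-w) g with hh
  have hC : Polynomial.C p ≠ 0 := by simpa using hp
  have hdeg : h.natDegree = 0 := by
    have := Polynomial.natDegree_le_of_dvd ((dvd_mul_right h h).trans h1) hC
    simpa using this
  obtain ⟨q, hq⟩ := Polynomial.natDegree_eq_zero.1 hdeg
  rw [← hq, ← map_mul, Polynomial.C_dvd_iff_dvd_coeff] at h1
  have h2 := h1 0
  rw [Polynomial.coeff_C_zero] at h2
  have hu : IsUnit h := by
    rw [← hq]; exact (hsf q h2).map Polynomial.C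
  have := hu.map (shiftEnd w)
  rwa [hh, shiftEnd_shiftEnd] at this

/-- The coefficient of `zⁿ` in `p(x + z w)` is the constant `pₙ(w)`, where `pₙ` is the part of `p`
of top degree `n`. -/
lemma coeff_shiftHom (w : Fin 3 → ℝ) (p : MvPolynomial (Fin 3) ℝ) :
    (shiftHom w p).coeff p.totalDegree =
      C (eval w (homogeneousComponent p.totalDegree p)) := by
  set n := p.totalDegree with hn
  have h0 : ((shiftHom w p).coeff n).totalDegree = 0 := by
    by_cases h : (shiftHom w p).coeff n = 0
    · simp [h]
    · have := wtLE_shiftHom w p n h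
      omega
  rw [totalDegree_eq_zero_iff_eq_C] at h0
  rw [h0]
  congr 1
  -- a constant is computed by specialising `x` to `0`
  have h1 : coeff 0 ((shiftHom w p).coeff n) = ((shiftHom w p).map constantCoeff).coeff n := by
    rw [Polynomial.coeff_map]; rfl
  have h2 : ∀ q : MvPolynomial (Fin 3) ℝ, (shiftHom w q).map constantCoeff =
      eval₂ Polynomial.C (fun i => Polynomial.C (w i) * Polynomial.X) q := by
    intro q
    induction q using MvPolynomial.induction_on with
    | C c => simp
    | add p q hp hq => simp [hp, hq]
    | mul_X p i hp =>
      rw [map_mul, Polynomial.map_mul, hp, shiftHom_X]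
      simp
  rw [h1, h2, eval₂_eq', Polynomial.finsetSum_coeff, homogeneousComponent_apply, map_sum,
    Finset.sum_filter]
  refine Finset.sum_congr rfl fun s _ => ?_
  have h3 : ∏ i, (Polynomial.C (w i) * Polynomial.X) ^ s i =
      Polynomial.C (∏ i, w i ^ s i) * Polynomial.X ^ s.degree := by
    rw [Finsupp.degree_eq_sum, Fin.sum_univ_three, Fin.prod_univ_three, Fin.prod_univ_three]
    simp only [map_mul, map_pow, mul_pow, pow_add]
    ring
  rw [h3, Polynomial.coeff_C_mul, Polynomial.coeff_C_mul, Polynomial.coeff_X_pow, eval_monomial,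
    Finsupp.prod_fintype _ _ (by simp)]
  simp [eq_comm]

lemma homogeneousComponent_totalDegree_ne_zero {p : MvPolynomial (Fin 3) ℝ} (hp : p ≠ 0) :
    homogeneousComponent p.totalDegree p ≠ 0 := by
  -- a monomial of `p` attaining the total degree
  obtain ⟨s, hs, hs'⟩ := Finset.exists_mem_eq_sup p.support (by simpa using hp)
    (fun s => s.sum fun _ e => e)
  intro h
  have h1 := congrArg (coeff s) h
  rw [coeff_homogeneousComponent, if_pos, coeff_zero] at h1
  · exact (mem_support_iff.1 hs) h1
  · rw [totalDegree, hs']; rfl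

/-! ### The discriminant of `p` in the direction `w` -/

/-- Gauss's lemma: a monic polynomial that is squarefree over an integrally closed domain stays
squarefree over the fraction field, so it is separable there in characteristic zero. -/
lemma separable_map_of_squarefree {R : Type*} [CommRing R] [IsDomain R] [IsIntegrallyClosed R]
    [CharZero (FractionRing R)] {f : Polynomial R} (hf : f.Monic) (hsf : Squarefree f) :
    (f.map (algebraMap R (FractionRing R))).Separable := by
  rw [PerfectField.separable_iff_squarefree]
  intro g hg
  obtain ⟨g', hg'⟩ := IsIntegrallyClosed.eq_map_mul_C_of_dvd (FractionRing R) hf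
    ((dvd_mul_right g g).trans hg)
  have hg0 : g ≠ 0 := by
    rintro rfl
    rw [mul_zero, zero_dvd_iff] at hg
    exact (hf.map _).ne_zero hg
  have hlc : IsUnit (Polynomial.C g.leadingCoeff) := by
    rw [Polynomial.isUnit_C]; simpa using hg0
  have hlc0 : g.leadingCoeff ≠ 0 := by simpa using hg0
  have hmon : (g'.map (algebraMap R (FractionRing R))).Monic := by
    have h := congrArg Polynomial.leadingCoeff hg'
    rw [Polynomial.leadingCoeff_mul, Polynomial.leadingCoeff_C] at h
    exact mul_right_cancel₀ hlc0 (h.trans (one_mul _).symm)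
  have hmon' : g'.Monic :=
    Polynomial.monic_of_injective (IsFractionRing.injective R (FractionRing R)) hmon
  have hdvd : g' * g' ∣ f := by
    rw [← Polynomial.map_dvd_map _ (IsFractionRing.injective R (FractionRing R))
      (hmon'.mul hmon'), Polynomial.map_mul]
    exact (mul_dvd_mul (Dvd.intro _ hg') (Dvd.intro _ hg')).trans hg
  have := (hsf g' hdvd).map (Polynomial.mapRingHom (algebraMap R (FractionRing R)))
  rw [← hg']
  exact this.mul hlc

/-- If nonzero entries satisfy `deg Mᵢⱼ ≤ bⱼ - aᵢ`, every term of the Leibniz expansion has degree at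
most `∑ bⱼ - ∑ aᵢ`. -/
lemma totalDegree_det_le {m : ℕ} (M : Matrix (Fin m) (Fin m) (MvPolynomial (Fin 3) ℝ))
    (a b : Fin m → ℕ) (h : ∀ i j, M i j ≠ 0 → (M i j).totalDegree + a i ≤ b j) (N : ℕ)
    (hN : ∑ j, b j ≤ N + ∑ i, a i) : M.det.totalDegree ≤ N := by
  rw [Matrix.det_apply]
  refine totalDegree_finsetSum_le fun σ _ => ?_
  refine (totalDegree_smul_le _ _).trans ?_
  by_cases h0 : ∃ j, M (σ j) j = 0
  · obtain ⟨j, hj⟩ := h0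
    have h1 : ∏ j, M (σ j) j = 0 := Finset.prod_eq_zero (Finset.mem_univ j) hj
    exact (congrArg totalDegree h1).le.trans (by simp)
  push Not at h0
  have h1 := totalDegree_finsetProd (Finset.univ) fun j => M (σ j) j
  have h2 : ∑ j, ((M (σ j) j).totalDegree + a (σ j)) ≤ ∑ j, b j :=
    Finset.sum_le_sum fun j _ => h _ _ (h0 j)
  rw [Finset.sum_add_distrib, Equiv.sum_comp σ a] at h2
  omega

/-- Give row `i` of the Sylvester matrix weight `i`, and column `j` of either half weight `n + j`. -/
lemma totalDegree_resultant_le {n : ℕ} {f g} (hf : WtLE n f) (hg : WtLE n g) :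
    (Polynomial.resultant f g n n).totalDegree ≤ n ^ 2 := by
  refine totalDegree_det_le _ (fun i => (i : ℕ))
    (Fin.addCases (fun j => n + (j : ℕ)) (fun j => n + (j : ℕ))) ?_ _ ?_
  · intro i j hij
    induction j using Fin.addCases with
    | left j =>
      simp only [Polynomial.sylvester, Matrix.of_apply, Fin.addCases_left] at hij ⊢
      split_ifs at hij ⊢ with h
      · have := hg _ hij
        have := h.1
        omega
      · exact absurd rfl hij
    | right j =>
      simp only [Polynomial.sylvester, Matrix.of_apply, Fin.addCases_right] at hij ⊢
      split_ifs at hij ⊢ with h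
      · have := hf _ hij
        have := h.1
        omega
      · exact absurd rfl hij
  · rw [Fin.sum_univ_add, Fin.sum_univ_add]
    simp only [Fin.addCases_left, Fin.addCases_right, Fin.val_castAdd, Fin.val_natAdd,
      Finset.sum_add_distrib, Finset.sum_const, Finset.card_univ, Fintype.card_fin, smul_eq_mul]
    nlinarith

/-- If `w` is not a zero of the top-degree part of `p`, the planes parallel to `w` that contain a
critical line lie in the zero set of a single nonzero polynomial of degree at most `n²`: the
resultant of `p(x + z w)` and its `z`-derivative. -/
lemma exists_resultant {p : MvPolynomial (Fin 3) ℝ} (hp : p ≠ 0) (hsf : Squarefree p)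
    (w : Fin 3 → ℝ) (hw : eval w (homogeneousComponent p.totalDegree p) ≠ 0) :
    ∃ D : MvPolynomial (Fin 3) ℝ, D ≠ 0 ∧ D.totalDegree ≤ p.totalDegree ^ 2 ∧
      ∀ x : Fin 3 → ℝ, ∀ z : ℝ, eval (x + z • w) p = 0 →
        (∀ i, eval (x + z • w) (pderiv i p) = 0) → eval x D = 0 := by
  set n := p.totalDegree with hn
  set F := shiftHom w p with hF
  set c := eval w (homogeneousComponent n p) with hc
  have hFn : F.coeff n = C c := coeff_shiftHom w p
  have hFW : WtLE n F := wtLE_shiftHom w p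
  have hFd : F.natDegree = n := by
    refine le_antisymm hFW.natDegree_le (Polynomial.le_natDegree_of_ne_zero ?_)
    rw [hFn]; simpa using hw
  have hFd' : F.derivative.natDegree ≤ n := hFW.derivative.natDegree_le
  refine ⟨Polynomial.resultant F F.derivative n n, ?_, totalDegree_resultant_le hFW hFW.derivative,
    ?_⟩
  · -- it suffices that `F` is separable over the field of rational functions
    set K := FractionRing (MvPolynomial (Fin 3) ℝ)
    set φ := algebraMap (MvPolynomial (Fin 3) ℝ) K with hφ
    have hinj : Function.Injective φ := IsFractionRing.injective _ K
    have : CharZero K := charZero_of_injective_algebraMap (R := MvPolynomial (Fin 3) ℝ) hinj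
    have hcc : (C c⁻¹ : MvPolynomial (Fin 3) ℝ) * C c = 1 := by
      rw [← map_mul, inv_mul_cancel₀ hw, map_one]
    have hu : IsUnit (Polynomial.C (C c⁻¹ : MvPolynomial (Fin 3) ℝ)) :=
      ((isUnit_iff_ne_zero.2 (inv_ne_zero hw)).map C).map Polynomial.C
    -- `G` is `F` made monic
    set G := Polynomial.C (C c⁻¹ : MvPolynomial (Fin 3) ℝ) * F with hG
    have hGm : G.Monic := by
      rw [Polynomial.Monic, hG, Polynomial.leadingCoeff_mul, Polynomial.leadingCoeff_C,
        Polynomial.leadingCoeff, hFd, hFn, hcc]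
    have hGF : G ∣ F := (hu.dvd_mul_left).1 (by exact dvd_refl _ : G ∣ _ * F)
    have hGs : Squarefree G := (squarefree_shiftHom w hp hsf).squarefree_of_dvd hGF
    have hsep : (F.map φ).Separable := (separable_map_of_squarefree hGm hGs).of_dvd
      (Polynomial.map_dvd φ (Dvd.intro_left _ rfl))
    intro h0
    have h1 := congrArg φ h0
    rw [← Polynomial.resultant_map_map, map_zero, ← Polynomial.derivative_map] at h1
    have hdeg : (F.map φ).natDegree = n := by
      rw [Polynomial.natDegree_map_eq_of_injective hinj, hFd]
    have hdeg' : (F.map φ).derivative.natDegree ≤ n := by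
      rw [Polynomial.derivative_map, Polynomial.natDegree_map_eq_of_injective hinj]
      exact hFd'
    -- the second size `n` exceeds the degree of the derivative, which contributes only a power of
    -- the leading coefficient of `F`
    obtain ⟨k, hk⟩ := exists_add_of_le hdeg'
    have h2 : (F.map φ).resultant (F.map φ).derivative n
        ((F.map φ).derivative.natDegree + k) = 0 := by rw [← hk]; exact h1
    rw [Polynomial.resultant_add_right_deg _ _ _ _ _ le_rfl] at h2
    have h3 := Polynomial.resultant_ne_zero _ _ hsep
    rw [hdeg] at h3
    refine mul_ne_zero (pow_ne_zero _ ?_) h3 h2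
    rw [Polynomial.coeff_map, hFn]
    exact fun h => hw (C_injective _ _ (hinj (by rw [h, C_0, map_zero])))
  · -- the resultant is a combination of `F` and its derivative, so it vanishes with them
    intro x z h1 h2
    -- for `n = 0` the empty Sylvester determinant is `1`, but a nonzero constant has no zeros
    have hn0 : n ≠ 0 := by
      intro h0
      rw [hn, totalDegree_eq_zero_iff_eq_C] at h0
      rw [h0, eval_C] at h1
      rw [h1, C_0] at h0
      exact hp h0
    obtain ⟨A, B, -, -, hAB⟩ := Polynomial.exists_mul_add_mul_eq_C_resultant F F.derivative
      hFW.natDegree_le hFd' (Or.inl hn0)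
    have h3 := congrArg (Polynomial.eval₂ (eval x) z) hAB
    have h4 : Polynomial.eval₂ (eval x) z F.derivative = 0 := by
      rw [hF, derivative_shiftHom, Polynomial.eval₂_finsetSum]
      refine Finset.sum_eq_zero fun i _ => ?_
      rw [Polynomial.eval₂_mul, eval₂_shiftHom, h2, mul_zero]
    rw [Polynomial.eval₂_add, Polynomial.eval₂_mul, Polynomial.eval₂_mul, h4, hF, eval₂_shiftHom,
      h1, Polynomial.eval₂_C] at h3
    simpa using h3.symm

/-! ### Generic directions and planes -/

/-- Some point is a zero neither of `q` nor of any of the functionals. -/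
lemma exists_generic {ι : Type*} (q : MvPolynomial (Fin 3) ℝ) (hq : q ≠ 0) (I : Finset ι)
    (φ : ι → Module.Dual ℝ (Fin 3 → ℝ)) (hφ : ∀ i ∈ I, φ i ≠ 0) :
    ∃ w, eval w q ≠ 0 ∧ ∀ i ∈ I, φ i w ≠ 0 := by
  set L : ι → MvPolynomial (Fin 3) ℝ := fun i => ∑ k, C (φ i (Pi.single k 1)) * X k with hL
  have hev : ∀ i w, eval w (L i) = φ i w := by
    intro i w
    conv_rhs => rw [pi_eq_sum_univ' w, map_sum]
    simp only [hL, map_sum, map_mul, eval_C, eval_X, map_smul, smul_eq_mul]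
    exact Finset.sum_congr rfl fun k _ => mul_comm _ _
  have hne : q * ∏ i ∈ I, L i ≠ 0 := by
    refine mul_ne_zero hq (Finset.prod_ne_zero_iff.2 fun i hi h0 => hφ i hi ?_)
    refine LinearMap.ext fun w => ?_
    rw [← hev, h0, map_zero, LinearMap.zero_apply]
  by_contra! hcon
  refine hne (MvPolynomial.funext fun w => ?_)
  rw [map_mul, map_prod, map_zero]
  by_cases h : eval w q = 0
  · rw [h, zero_mul]
  · obtain ⟨i, hi, h0⟩ := hcon w h
    rw [Finset.prod_eq_zero hi ((hev i w).trans h0), mul_zero]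

lemma finrank_span_pair_of_notMem {v u : Fin 3 → ℝ} (hv : v ≠ 0)
    (hu : u ∉ Submodule.span ℝ {v}) : Module.finrank ℝ (Submodule.span ℝ {v, u}) = 2 := by
  have hli : LinearIndependent ℝ ![v, u] := by
    rw [LinearIndependent.pair_iff' hv]
    intro a ha
    exact hu (ha ▸ Submodule.smul_mem _ a (Submodule.mem_span_singleton_self v))
  have := finrank_span_eq_card hli
  rwa [Matrix.range_cons_cons_empty, Fintype.card_fin] at this

lemma exists_dual_pair {v u : Fin 3 → ℝ} (hv : v ≠ 0) (hu : u ∉ Submodule.span ℝ {v}) :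
    ∃ χ : Module.Dual ℝ (Fin 3 → ℝ), χ ≠ 0 ∧ χ v = 0 ∧ χ u = 0 := by
  have hlt : Submodule.span ℝ {v, u} < ⊤ := by
    rw [lt_top_iff_ne_top]
    intro h
    have := finrank_span_pair_of_notMem hv hu
    rw [h] at this
    simp at this
  obtain ⟨χ, h0, hχ⟩ := Submodule.exists_le_ker_of_lt_top _ hlt
  exact ⟨χ, h0, hχ (Submodule.subset_span (by simp)), hχ (Submodule.subset_span (by simp))⟩

/-- In `ℝ³` the kernel of a nonzero functional that kills the independent vectors `v` and `u` is
their span. -/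
lemma mem_span_pair_of_dual {v u : Fin 3 → ℝ} (hv : v ≠ 0) (hu : u ∉ Submodule.span ℝ {v})
    {φ : Module.Dual ℝ (Fin 3 → ℝ)} (hφ : φ ≠ 0) (h1 : φ v = 0) (h2 : φ u = 0)
    {x : Fin 3 → ℝ} (hx : φ x = 0) : x ∈ Submodule.span ℝ {v, u} := by
  have hle : Submodule.span ℝ {v, u} ≤ LinearMap.ker φ := by
    rw [Submodule.span_le]
    rintro y (rfl | rfl) <;> simpa
  have h3 := Module.Dual.finrank_ker_add_one_of_ne_zero hφ
  rw [Submodule.eq_of_le_of_finrank_eq hle]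
  · exact hx
  · rw [finrank_span_pair_of_notMem hv hu]
    simp at h3
    omega

lemma exists_notMem_span_singleton (v : Fin 3 → ℝ) : ∃ u, u ∉ Submodule.span ℝ {v} := by
  by_contra! h
  have h1 : Submodule.span ℝ {v} = ⊤ := by
    rw [eq_top_iff]; exact fun u _ => h u
  have h2 := finrank_span_le_card (R := ℝ) ({v} : Set (Fin 3 → ℝ))
  rw [h1] at h2
  simp at h2

/-- For two distinct lines, some vector that is not parallel to the second one is parallel to every
plane containing both. -/
lemma exists_transversal {a v a' v' : Fin 3 → ℝ} (hv : v ≠ 0)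
    (hne : {p | ∃ t : ℝ, p = a + t • v} ≠ {p | ∃ t : ℝ, p = a' + t • v'}) :
    ∃ u, u ∉ Submodule.span ℝ {v'} ∧ ∀ φ : Module.Dual ℝ (Fin 3 → ℝ),
      φ v = 0 → φ (a' - a) = 0 → φ u = 0 := by
  by_cases h1 : v ∈ Submodule.span ℝ {v'}
  swap
  · exact ⟨v, h1, fun φ h _ => h⟩
  by_cases h2 : a' - a ∈ Submodule.span ℝ {v'}
  swap
  · exact ⟨a' - a, h2, fun φ _ h => h⟩
  -- otherwise the two lines coincide
  exfalso
  obtain ⟨s, rfl⟩ := Submodule.mem_span_singleton.1 h1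
  obtain ⟨r, hr⟩ := Submodule.mem_span_singleton.1 h2
  have hs : s ≠ 0 := by rintro rfl; simp at hv
  have ha : a' = a + r • v' := by rw [hr]; abel
  refine hne (Set.ext fun x => ⟨?_, ?_⟩)
  · rintro ⟨t, rfl⟩
    refine ⟨t * s - r, ?_⟩
    rw [ha]; module
  · rintro ⟨t, rfl⟩
    refine ⟨(t + r) / s, ?_⟩
    rw [ha, smul_smul, div_mul_cancel₀ _ hs]; module

lemma eval_aeval_line (o b : Fin 3 → ℝ) (t : ℝ) (q : MvPolynomial (Fin 3) ℝ) :
    (aeval (fun k => Polynomial.C (o k) + Polynomial.C (b k) * Polynomial.X) q).eval t =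
      eval (o + t • b) q := by
  induction q using MvPolynomial.induction_on with
  | C c => simp
  | add p q hp hq => rw [map_add, Polynomial.eval_add, hp, hq, map_add]
  | mul_X p i hp =>
    rw [map_mul, Polynomial.eval_mul, hp, map_mul, aeval_X]
    simp only [Polynomial.eval_add, Polynomial.eval_mul, Polynomial.eval_C,
      Polynomial.eval_X, eval_X, Pi.add_apply, Pi.smul_apply, smul_eq_mul]
    ring

/-- Project along a generic direction `w`: the planes through the lines of `S` parallel to `w` are
distinct and lie in the zero set of the polynomial `D` of `exists_resultant`. A generic line through
a point where `D ≠ 0` meets them in distinct points, at each of which `D` vanishes, so there are at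
most `deg D` of them. -/
lemma card_le_of_critical {p : MvPolynomial (Fin 3) ℝ} (hp : p ≠ 0) (hsf : Squarefree p)
    (S : Finset (Set (Fin 3 → ℝ))) (hS : ∀ ℓ ∈ S, IsCriticalLine p ℓ) :
    S.card ≤ p.totalDegree ^ 2 := by
  classical
  have hline : ∀ ℓ : S, ∃ a v : Fin 3 → ℝ, v ≠ 0 ∧ ℓ.1 = {p | ∃ t : ℝ, p = a + t • v} :=
    fun ℓ => (hS ℓ.1 ℓ.2).1
  choose a v hv hav using hline
  have hcrit : ∀ (i : S) (t : ℝ), eval (a i + t • v i) p = 0 ∧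
      ∀ k, eval (a i + t • v i) (pderiv k p) = 0 := by
    intro i t
    refine (hS i.1 i.2).2 _ ?_
    rw [hav i]; exact ⟨t, rfl⟩
  have hu : ∀ i j : S, ∃ u, u ∉ Submodule.span ℝ {v j} ∧ (i ≠ j →
      ∀ φ : Module.Dual ℝ (Fin 3 → ℝ), φ (v i) = 0 → φ (a j - a i) = 0 → φ u = 0) := by
    intro i j
    by_cases hij : i = j
    · obtain ⟨u, hu⟩ := exists_notMem_span_singleton (v j)
      exact ⟨u, hu, fun h => absurd hij h⟩
    · obtain ⟨u, hu, hu'⟩ := exists_transversal (a := a i) (a' := a j) (v' := v j) (hv i)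
        (by rw [← hav, ← hav]; exact fun h => hij (Subtype.ext h))
      exact ⟨u, hu, fun _ => hu'⟩
  choose u huv huφ using hu
  have hχ : ∀ i j : S, ∃ χ : Module.Dual ℝ (Fin 3 → ℝ), χ ≠ 0 ∧ χ (v j) = 0 ∧ χ (u i j) = 0 :=
    fun i j => exists_dual_pair (hv j) (huv i j)
  choose χ hχ0 hχv hχu using hχ
  -- a direction of projection that is generic for `p` and keeps the projected lines distinct
  obtain ⟨w, hwp, hwχ⟩ := exists_generic _ (homogeneousComponent_totalDegree_ne_zero hp)
    (Finset.univ : Finset (S × S)) (fun ij => χ ij.1 ij.2) (fun ij _ => hχ0 _ _)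
  have hwχ : ∀ i j, χ i j w ≠ 0 := fun i j => hwχ (i, j) (Finset.mem_univ _)
  have hwv : ∀ j, w ∉ Submodule.span ℝ {v j} := by
    intro j hj
    obtain ⟨s, rfl⟩ := Submodule.mem_span_singleton.1 hj
    exact hwχ j j (by rw [map_smul, hχv, smul_zero])
  obtain ⟨D, hD0, hDdeg, hD⟩ := exists_resultant hp hsf w hwp
  -- `φ j` cuts out the plane through the `j`-th line parallel to `w`
  have hφ : ∀ j, ∃ φ : Module.Dual ℝ (Fin 3 → ℝ), φ ≠ 0 ∧ φ (v j) = 0 ∧ φ w = 0 :=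
    fun j => exists_dual_pair (hv j) (hwv j)
  choose φ hφ0 hφv hφw using hφ
  -- distinct lines lie in distinct such planes
  have hdist : ∀ i j, i ≠ j → φ j (v i) = 0 → φ j (a j - a i) = 0 → False := by
    intro i j hij h1 h2
    have h3 := mem_span_pair_of_dual (hv j) (huv i j) (hφ0 j) (hφv j) (huφ i j hij _ h1 h2) (hφw j)
    obtain ⟨s, r, hsr⟩ := Submodule.mem_span_pair.1 h3
    refine hwχ i j ?_
    rw [← hsr, map_add, map_smul, map_smul, hχv, hχu, smul_zero, smul_zero, add_zero]
  have hvan : ∀ j x, φ j (x - a j) = 0 → eval x D = 0 := by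
    intro j x hx
    obtain ⟨s, r, hsr⟩ := Submodule.mem_span_pair.1
      (mem_span_pair_of_dual (hv j) (hwv j) (hφ0 j) (hφv j) (hφw j) hx)
    have hx' : x + (-r) • w = a j + s • v j := by
      have : x = a j + (s • v j + r • w) := by rw [hsr]; abel
      rw [this]; module
    refine hD x (-r) ?_ ?_ <;> rw [hx']
    · exact (hcrit j s).1
    · exact (hcrit j s).2
  -- a line through a point `o` off the zero set of `D` that meets these planes in distinct points
  obtain ⟨o, ho⟩ : ∃ o, eval o D ≠ 0 := by
    by_contra! h
    exact hD0 (MvPolynomial.funext fun x => by rw [h, map_zero])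
  set c : S → ℝ := fun j => φ j (a j - o) with hc
  have hc0 : ∀ j, c j ≠ 0 := by
    intro j h
    refine ho (hvan j o ?_)
    rw [← neg_sub, map_neg, neg_eq_zero]; exact h
  -- the line `o + t b` meets plane `j` at `t = c j / φ j b`; `b` should make these exist and differ
  set ψ : S × S → Module.Dual ℝ (Fin 3 → ℝ) := fun ij =>
    if ij.1 = ij.2 then φ ij.1 else c ij.1 • φ ij.2 - c ij.2 • φ ij.1 with hψ
  have hψ0 : ∀ ij, ψ ij ≠ 0 := by
    rintro ⟨i, j⟩ h
    by_cases hij : i = j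
    · simp only [hψ, hij, if_true] at h
      exact hφ0 j h
    simp only [hψ, hij, if_false, sub_eq_zero] at h
    have h' : ∀ x, c i * φ j x = c j * φ i x := fun x => by
      simpa using LinearMap.congr_fun h x
    refine hdist i j hij ?_ ?_
    · have := h' (v i)
      rw [hφv, mul_zero] at this
      exact (mul_eq_zero.1 this).resolve_left (hc0 i)
    · have h1 : c i * φ j (a i - o) = c i * c j := by
        rw [h', mul_comm]
      have h2 : φ j (a i - o) = φ j (a j - o) := mul_left_cancel₀ (hc0 i) h1
      have : a j - a i = (a j - o) - (a i - o) := by abel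
      rw [this, map_sub, h2, sub_self]
  obtain ⟨b, -, hb⟩ := exists_generic 1 one_ne_zero Finset.univ ψ (fun ij _ => hψ0 ij)
  have hb0 : ∀ j, φ j b ≠ 0 := by
    intro j
    simpa [hψ] using hb (j, j) (Finset.mem_univ _)
  have hb1 : ∀ i j, i ≠ j → c i * φ j b ≠ c j * φ i b := by
    intro i j hij
    have := hb (i, j) (Finset.mem_univ _)
    simpa [hψ, hij, sub_eq_zero] using this
  set g : Polynomial ℝ := aeval (fun k => Polynomial.C (o k) + Polynomial.C (b k) * Polynomial.X) D
    with hg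
  have hgev : ∀ t, g.eval t = eval (o + t • b) D := by
    intro t
    rw [hg, eval_aeval_line]
  have hg0 : g ≠ 0 := by
    intro h
    have := hgev 0
    rw [h] at this
    exact ho (by simpa using this.symm)
  have hgd : g.natDegree ≤ p.totalDegree ^ 2 := by
    have := MvPolynomial.aeval_natDegree_le D hDdeg
      (fun k => Polynomial.C (o k) + Polynomial.C (b k) * Polynomial.X) (n := 1)
      (fun k => by compute_degree)
    simpa using this
  have hroot : ∀ j, g.IsRoot (c j / φ j b) := by
    intro j
    rw [Polynomial.IsRoot, hgev]
    refine hvan j _ ?_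
    have : o + (c j / φ j b) • b - a j = (c j / φ j b) • b - (a j - o) := by abel
    rw [this, map_sub, map_smul, smul_eq_mul, div_mul_cancel₀ _ (hb0 j), sub_self]
  have hinj : Function.Injective fun j => c j / φ j b := by
    intro i j hij
    by_contra hne
    refine hb1 i j hne ?_
    simpa [div_eq_div_iff (hb0 i) (hb0 j)] using hij
  calc S.card = (Finset.univ.image fun j : S => c j / φ j b).card := by
        rw [Finset.card_image_of_injective _ hinj, Finset.card_univ, Fintype.card_coe]
    _ ≤ g.natDegree := by
        refine Polynomial.card_le_degree_of_subset_roots fun t ht => ?_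
        obtain ⟨j, -, rfl⟩ := Finset.mem_image.1 ht
        exact (Polynomial.mem_roots hg0).2 (hroot j)
    _ ≤ _ := hgd

/-- A nonzero squarefree polynomial `p ∈ ℝ[x,y,z]` of total degree at most `d` has at
most `d²` critical lines. -/
theorem critical_lines_card_le (p : MvPolynomial (Fin 3) ℝ) (hp : p ≠ 0)
    (hsf : Squarefree p) (d : ℕ) (hd : p.totalDegree ≤ d) :
    {ℓ : Set (Fin 3 → ℝ) | IsCriticalLine p ℓ}.Finite ∧
      {ℓ : Set (Fin 3 → ℝ) | IsCriticalLine p ℓ}.ncard ≤ d ^ 2 := by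
  have hle : p.totalDegree ^ 2 ≤ d ^ 2 := Nat.pow_le_pow_left hd 2
  have hfin : {ℓ : Set (Fin 3 → ℝ) | IsCriticalLine p ℓ}.Finite := by
    by_contra hinf
    obtain ⟨T, hT, hcard⟩ := Set.Infinite.exists_subset_card_eq hinf (p.totalDegree ^ 2 + 1)
    have := card_le_of_critical hp hsf T fun ℓ hℓ => hT hℓ
    omega
  refine ⟨hfin, ?_⟩
  rw [Set.ncard_eq_toFinset_card _ hfin]
  exact (card_le_of_critical hp hsf _ fun ℓ hℓ => (hfin.mem_toFinset).1 hℓ).trans hle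
end

section
/- Let f, g ∈ ℂ[x,y,z] be nonconstant polynomials having no common nonconstant factor. Then the set of irreducible complex algebraic curves in ℂ³ that are contained simultaneously in the zero set of f and in the zero set of g is finite, of cardinality at most (deg f) · (deg g). -/
/-!
A Hilbert-function count, in place of resultants or projective Bézout. Write `d = deg f`,
`e = deg g`, and let `R≤n` be the space of polynomials of degree at most `n` in three variables,
of dimension `(n+1)(n+2)(n+3)/6`.

Since `f` and `g` are coprime, the only syzygies `f a + g b = 0` are the Koszul ones
`(a, b) = (g c, -f c)`. Hence `(f, g) ∩ R≤n` has codimension in `R≤n` at most a second difference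
of a cubic, namely `d e n + O(1)`. On the other hand, let `P₁, …, P_m` be the ideals of `m`
distinct irreducible curves in `V(f, g)`. They are prime and, all having dimension one, pairwise
incomparable (`prime_le_of_le_of_trdeg_eq_one`), so there are `h_i ∉ P_i` lying in every other
`P_j`. Some coordinate `x_{k_i}` is transcendental modulo `P_i`, so the polynomials
`h_i x_{k_i}^j` are linearly independent modulo `⋂ P_i ⊇ (f, g)`. This produces
`m n - O(1)` independent classes in `R≤n / ((f, g) ∩ R≤n)`, and `m ≤ d e` follows by letting `n`
grow (`card_primes_le`). As this bounds every finite set of curves, there are finitely many.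
-/

open MvPolynomial

/-- An algebraic set in `Kⁿ`: the common zero locus of a set of polynomials. -/
def IsAlgSet (K : Type) [Field K] (n : ℕ) (V : Set (Fin n → K)) : Prop :=
  ∃ S : Set (MvPolynomial (Fin n) K), V = {x | ∀ p ∈ S, eval x p = 0}

/-- An irreducible algebraic set: nonempty, and not the union of two proper algebraic subsets. -/
def IsIrredAlgSet (K : Type) [Field K] (n : ℕ) (V : Set (Fin n → K)) : Prop :=
  IsAlgSet K n V ∧ V.Nonempty ∧
    ∀ V₁ V₂ : Set (Fin n → K), IsAlgSet K n V₁ → IsAlgSet K n V₂ →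
      V = V₁ ∪ V₂ → V₁ = V ∨ V₂ = V

/-- The vanishing ideal of a set `V ⊆ Kⁿ`. -/
def vanishingIdeal (K : Type) [Field K] (n : ℕ) (V : Set (Fin n → K)) :
    Ideal (MvPolynomial (Fin n) K) where
  carrier := {p | ∀ x ∈ V, eval x p = 0}
  add_mem' := by
    intro a b ha hb x hx
    simp [ha x hx, hb x hx]
  zero_mem' := by
    intro x hx
    simp
  smul_mem' := by
    intro c p hp x hx
    simp [smul_eq_mul, hp x hx]

/-- Transcendence degree of a `K`-algebra `A`: supremum of cardinalities of
algebraically independent subsets. -/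
noncomputable def trdegOver (K A : Type*) [Field K] [CommRing A] [Algebra K A] : Cardinal :=
  ⨆ s : {s : Set A // AlgebraicIndependent K ((↑) : s → A)}, Cardinal.mk s.1

/-- The dimension of an irreducible algebraic set: the transcendence degree over `K`
of its coordinate ring `K[x₁,…,xₙ]/I(V)`. -/
noncomputable def irredAlgSetDim (K : Type) [Field K] (n : ℕ) (V : Set (Fin n → K)) : Cardinal :=
  trdegOver K (MvPolynomial (Fin n) K ⧸ vanishingIdeal K n V)

/-- The dimension of an algebraic set: the maximum of the dimensions of the irreducible
algebraic sets contained in it. -/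
noncomputable def algSetDim (K : Type) [Field K] (n : ℕ) (V : Set (Fin n → K)) : Cardinal :=
  ⨆ W : {W : Set (Fin n → K) // IsIrredAlgSet K n W ∧ W ⊆ V}, irredAlgSetDim K n W.1

/-- An irreducible algebraic curve: an irreducible algebraic set of dimension 1. -/
def IsIrredAlgCurve (K : Type) [Field K] (n : ℕ) (V : Set (Fin n → K)) : Prop :=
  IsIrredAlgSet K n V ∧ irredAlgSetDim K n V = 1

/-- An algebraic curve: an algebraic set of dimension 1. -/
def IsAlgCurve (K : Type) [Field K] (n : ℕ) (V : Set (Fin n → K)) : Prop :=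
  IsAlgSet K n V ∧ algSetDim K n V = 1

/-- The componentwise inclusion `ℝⁿ ↪ ℂⁿ`. -/
def inclC (n : ℕ) (x : Fin n → ℝ) : Fin n → ℂ := fun i => (x i : ℂ)

/-! ### Dimension counts -/

lemma six_mul_finrank_restrictTotalDegree (N : ℕ) :
    6 * Module.finrank ℂ (restrictTotalDegree (Fin 3) ℂ N) = (N + 1) * (N + 2) * (N + 3) := by
  classical
  have hset : {n : Fin 3 →₀ ℕ | (n.sum fun _ e => e) ≤ N} =
      ((Finset.range (N + 1)).biUnion fun k =>
        Finset.finsuppAntidiag (Finset.univ : Finset (Fin 3)) k : Finset (Fin 3 →₀ ℕ)) := by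
    ext n
    simp [Finset.mem_finsuppAntidiag, Finsupp.sum_fintype]
  have hcard : Module.finrank ℂ (restrictTotalDegree (Fin 3) ℂ N) =
      ∑ k ∈ Finset.range (N + 1), (k + 2).choose 2 := by
    rw [restrictTotalDegree, Module.finrank_eq_nat_card_basis (basisRestrictSupport ℂ _),
      hset, Nat.card_coe_set_eq, Set.ncard_coe_finset, Finset.card_biUnion]
    · refine Finset.sum_congr rfl fun k _ => ?_
      rw [Finset.card_finsuppAntidiag_nat_eq_choose]
      simp only [Finset.card_univ, Fintype.card_fin]
      rw [show 3 + k - 1 = k + 2 by omega, Nat.choose_symm_add]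
    · intro i _ j _ hij
      refine Finset.disjoint_left.2 fun n hi hj => ?_
      simp only [Finset.mem_finsuppAntidiag] at hi hj
      exact hij (hi.1.symm.trans hj.1)
  rw [hcard]
  clear hcard hset
  induction N with
  | zero => simp
  | succ N ih =>
    have h2 : 2 * (N + 1 + 2).choose 2 = (N + 3) * (N + 2) := by
      rw [mul_comm, Nat.choose_two_right, Nat.div_mul_cancel (Nat.even_mul_pred_self _).two_dvd]
      rfl
    rw [Finset.sum_range_succ, mul_add, ih]
    linarith [congrArg (3 * ·) h2]

lemma totalDegree_aeval_X_le (M : ℕ) (k : Fin 3) {p : Polynomial ℂ}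
    (hp : p ∈ Polynomial.degreeLT ℂ (M + 1)) :
    (Polynomial.aeval (X k : MvPolynomial (Fin 3) ℂ) p).totalDegree ≤ M := by
  rw [Polynomial.aeval_eq_sum_range, ← mem_restrictTotalDegree]
  refine Submodule.sum_mem _ fun i hi => Submodule.smul_mem _ _ ?_
  rw [mem_restrictTotalDegree, totalDegree_X_pow]
  have := Finset.mem_range.1 hi
  rcases eq_or_ne p 0 with rfl | h0
  · simp at this; omega
  · rw [Polynomial.mem_degreeLT, Polynomial.degree_eq_natDegree h0] at hp
    norm_cast at hp; omega

/-- The numerical end of the count: `a`, `b`, `c`, `n` stand for the dimensions of spaces of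
polynomials of bounded degree, and `n + c - a - b = d e (2 (M + D) + 4 + d + e) / 2` is linear in
`M` with slope `d e`. The value of `M` is large enough to rule out `m ≥ d e + 1`. -/
lemma le_mul_of_dimension_count (d e D m M : ℕ) (hM : M = d * e * (D + 1 + d + e)) (a b c n : ℕ)
    (ha : 6 * a = (M + e + D + 1) * (M + e + D + 2) * (M + e + D + 3))
    (hb : 6 * b = (M + d + D + 1) * (M + d + D + 2) * (M + d + D + 3))
    (hc : 6 * c = (M + D + 1) * (M + D + 2) * (M + D + 3))
    (hn : 6 * n = (M + d + e + D + 1) * (M + d + e + D + 2) * (M + d + e + D + 3))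
    (h : a + b + m * (M + 1) ≤ n + c) : m ≤ d * e := by
  by_contra hm
  have hm : d * e + 1 ≤ m := by omega
  have h1 := Nat.mul_le_mul_right (M + 1) hm
  have key : 2 * n + 2 * c = 2 * a + 2 * b + d * e * (2 * (M + D) + 4 + d + e) := by
    have : 6 * n + 6 * c = 6 * a + 6 * b + 3 * (d * e * (2 * (M + D) + 4 + d + e)) := by
      rw [ha, hb, hc, hn]; ring
    omega
  have h2 : 2 * ((d * e + 1) * (M + 1)) ≤ d * e * (2 * (M + D) + 4 + d + e) := by omega
  have h3 : d * e * (2 * (M + D) + 4 + d + e) + d * e * (d + e) =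
     d * e * (2 * M + 2) + 2 * (d * e * (D + 1 + d + e)) := by ring
  have h4 : 2 * ((d * e + 1) * (M + 1)) = d * e * (2 * M + 2) + 2 * M + 2 := by ring
  rw [← hM] at h3
  omega

lemma isRelPrime_of_no_common_factor (f g : MvPolynomial (Fin 3) ℂ) (hf : f ≠ 0)
    (hcop : ¬ ∃ h : MvPolynomial (Fin 3) ℂ, h.totalDegree ≠ 0 ∧ h ∣ f ∧ h ∣ g) :
    IsRelPrime f g := by
  intro h h1 h2
  have h0 : h.totalDegree = 0 := by
    by_contra h0; exact hcop ⟨h, h0, h1, h2⟩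
  rw [totalDegree_eq_zero_iff_eq_C] at h0
  have hne : h ≠ 0 := ne_zero_of_dvd_ne_zero hf h1
  rw [h0]
  refine (IsUnit.mk0 _ ?_).map C
  rintro h
  rw [h, C_0] at h0; exact hne h0

/-- Syzygies of a coprime pair are multiples of the Koszul syzygy, with the expected degree. -/
lemma exists_of_syzygy (f g a b : MvPolynomial (Fin 3) ℂ) (hg : g ≠ 0) (hr : IsRelPrime f g)
    (h : f * a + g * b = 0) (n : ℕ) (ha : a.totalDegree ≤ n + g.totalDegree) :
    ∃ c, c.totalDegree ≤ n ∧ a = g * c ∧ b = - (f * c) := by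
  have : g ∣ a := hr.symm.dvd_of_dvd_mul_left ⟨-b, by linear_combination h⟩
  obtain ⟨c, rfl⟩ := this
  refine ⟨c, ?_, rfl, ?_⟩
  · rcases eq_or_ne c 0 with rfl | hc
    · simp
    · rw [totalDegree_mul_of_isDomain hg hc] at ha; omega
  · refine mul_left_cancel₀ hg ?_
    linear_combination h

/-- At most `deg f * deg g` pairwise incomparable primes contain two coprime polynomials `f`, `g`
and have some coordinate `X (k i)` transcendental modulo `P i`. -/
lemma card_primes_le {ι : Type*} [Fintype ι] (f g : MvPolynomial (Fin 3) ℂ) (hg : g ≠ 0)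
    (hr : IsRelPrime f g) (P : ι → Ideal (MvPolynomial (Fin 3) ℂ)) (hP : ∀ i, (P i).IsPrime)
    (hfP : ∀ i, f ∈ P i) (hgP : ∀ i, g ∈ P i) (hinc : ∀ i j, i ≠ j → ¬ P j ≤ P i)
    (k : ι → Fin 3) (hk : ∀ i, ∀ p : Polynomial ℂ, Polynomial.aeval (X (k i)) p ∈ P i → p = 0) :
    Fintype.card ι ≤ f.totalDegree * g.totalDegree := by
  classical
  have hsep : ∀ i, ∃ h : MvPolynomial (Fin 3) ℂ, h ∉ P i ∧ ∀ j, j ≠ i → h ∈ P j := by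
    intro i
    have : ∀ j, ∃ q, j ≠ i → q ∈ P j ∧ q ∉ P i := by
      intro j
      by_cases hj : j = i
      · exact ⟨0, fun h => absurd hj h⟩
      · obtain ⟨q, h1, h2⟩ := SetLike.not_le_iff_exists.1 (hinc i j (Ne.symm hj))
        exact ⟨q, fun _ => ⟨h1, h2⟩⟩
    choose q hq using this
    refine ⟨∏ j ∈ Finset.univ.erase i, q j, ?_, fun j hj => ?_⟩
    · rw [(hP i).prod_mem_iff]
      rintro ⟨j, hj, hji⟩
      exact (hq j (Finset.ne_of_mem_erase hj)).2 hji
    · exact Ideal.mem_of_dvd _ (Finset.dvd_prod_of_mem q (by simp [hj])) (hq j hj).1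
  choose h hhi hhj using hsep
  set d := f.totalDegree with hd
  set e := g.totalDegree with he
  let D := ∑ i, (h i).totalDegree
  have hD : ∀ i, (h i).totalDegree ≤ D := fun i =>
    Finset.single_le_sum (f := fun i => (h i).totalDegree) (fun _ _ => Nat.zero_le _)
      (Finset.mem_univ i)
  let M := d * e * (D + 1 + d + e)
  let R := fun n => restrictTotalDegree (Fin 3) ℂ n
  -- `Θ (a, b, c) = f a + g b + ∑ i, h i * c i (X (k i))`; its kernel consists of Koszul syzygies.
  let Θ : (R (M + e + D) × R (M + d + D) × (ι → Polynomial.degreeLT ℂ (M + 1))) →ₗ[ℂ]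
      MvPolynomial (Fin 3) ℂ :=
    LinearMap.coprod (LinearMap.mulLeft ℂ f ∘ₗ (R (M + e + D)).subtype)
      (LinearMap.coprod (LinearMap.mulLeft ℂ g ∘ₗ (R (M + d + D)).subtype)
        (∑ i, LinearMap.mulLeft ℂ (h i) ∘ₗ (Polynomial.aeval (X (k i))).toLinearMap ∘ₗ
          (Polynomial.degreeLT ℂ (M + 1)).subtype ∘ₗ LinearMap.proj i))
  have hΘ : ∀ a b c, Θ (a, b, c) = f * a.1 + (g * b.1 +
      ∑ i, h i * Polynomial.aeval (X (k i)) (c i).1) := by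
    intro a b c
    simp [Θ]
  have hrange : LinearMap.range Θ ≤ R (M + d + e + D) := by
    rintro _ ⟨⟨a, b, c⟩, rfl⟩
    rw [hΘ]
    have ha := (mem_restrictTotalDegree _ _ _).1 a.2
    have hb := (mem_restrictTotalDegree _ _ _).1 b.2
    refine add_mem ?_ (add_mem ?_ (sum_mem fun i _ => ?_)) <;>
      refine (mem_restrictTotalDegree _ _ _).2 ((totalDegree_mul _ _).trans ?_)
    · omega
    · omega
    · have := totalDegree_aeval_X_le M (k i) (c i).2
      have := hD i
      omega
  have hker : Module.finrank ℂ (LinearMap.ker Θ) ≤ Module.finrank ℂ (R (M + D)) := by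
    have hsyz : ∀ x : LinearMap.ker Θ, ∃ c, c.totalDegree ≤ M + D ∧ x.1.1.1 = g * c ∧
        x.1.2.1.1 = - (f * c) ∧ x.1.2.2 = 0 := by
      rintro ⟨⟨a, b, c⟩, hx⟩
      rw [LinearMap.mem_ker, hΘ] at hx
      -- Modulo `P i` only the summand `h i * c i (X (k i))` survives.
      have hc : c = 0 := by
        funext i
        have hmem : h i * Polynomial.aeval (X (k i)) (c i).1 ∈ P i := by
          rw [← Finset.add_sum_erase _ _ (Finset.mem_univ i)] at hx
          have h1 : ∑ j ∈ Finset.univ.erase i, h j * Polynomial.aeval (X (k j)) (c j).1 ∈ P i :=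
            sum_mem fun j hj =>
              Ideal.mul_mem_right _ _ (hhj j i (Finset.ne_of_mem_erase hj).symm)
          have h2 := Ideal.mul_mem_right a.1 _ (hfP i)
          have h3 := Ideal.mul_mem_right b.1 _ (hgP i)
          have h4 := neg_mem (add_mem h2 (add_mem h3 h1))
          convert h4 using 1
          linear_combination hx
        exact Subtype.ext (hk i _ (((hP i).mem_or_mem hmem).resolve_left (hhi i)))
      subst hc
      simp only [Pi.zero_apply, ZeroMemClass.coe_zero, map_zero, mul_zero, Finset.sum_const_zero,
        add_zero] at hx
      have ha := (mem_restrictTotalDegree _ _ _).1 a.2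
      obtain ⟨c, h1, h2, h3⟩ := exists_of_syzygy f g a b hg hr hx (M + D) (by omega)
      exact ⟨c, h1, h2, h3, rfl⟩
    choose c hc1 hc2 hc3 hc4 using hsyz
    -- The cofactor of a syzygy is unique, as `g ≠ 0`, hence depends linearly on the syzygy.
    let φ : LinearMap.ker Θ →ₗ[ℂ] R (M + D) :=
      { toFun := fun x => ⟨c x, (mem_restrictTotalDegree _ _ _).2 (hc1 x)⟩
        map_add' := fun x y => Subtype.ext <| mul_left_cancel₀ hg <| by
          have h1 := hc2 (x + y)
          have h2 := hc2 x
          have h3 := hc2 y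
          simp only [Submodule.coe_add, Prod.fst_add] at h1 ⊢
          linear_combination h2 + h3 - h1
        map_smul' := fun r x => Subtype.ext <| mul_left_cancel₀ hg <| by
          have h1 := hc2 (r • x)
          have h2 := hc2 x
          simp only [Submodule.coe_smul, Prod.smul_fst, RingHom.id_apply, smul_eq_C_mul] at h1 ⊢
          linear_combination C r * h2 - h1 }
    refine LinearMap.finrank_le_finrank_of_injective (f := φ) fun x y hxy => ?_
    have hxy : c x = c y := congrArg Subtype.val hxy
    refine Subtype.ext (Prod.ext (Subtype.ext ?_) (Prod.ext (Subtype.ext ?_) ?_))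
    · rw [hc2, hc2, hxy]
    · rw [hc3, hc3, hxy]
    · rw [hc4, hc4]
  have hrn := LinearMap.finrank_range_add_finrank_ker Θ
  have hrle := Submodule.finrank_mono hrange
  have hdeg : Module.finrank ℂ (Polynomial.degreeLT ℂ (M + 1)) = M + 1 := by
    rw [Module.finrank_eq_card_basis (Polynomial.degreeLT.basis ℂ (M + 1)), Fintype.card_fin]
  rw [Module.finrank_prod, Module.finrank_prod, Module.finrank_pi_fintype] at hrn
  simp only [hdeg, Finset.sum_const, Finset.card_univ, smul_eq_mul] at hrn
  have hR := six_mul_finrank_restrictTotalDegree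
  exact le_mul_of_dimension_count d e D _ M rfl
    (Module.finrank ℂ (R (M + e + D))) (Module.finrank ℂ (R (M + d + D)))
    (Module.finrank ℂ (R (M + D))) (Module.finrank ℂ (R (M + d + e + D)))
    (hR _) (hR _) (hR _) (hR _) (by omega)


/-! ### Vanishing ideals of irreducible curves -/

lemma vanishingIdeal_isPrime {V : Set (Fin 3 → ℂ)} (hV : IsIrredAlgSet ℂ 3 V) :
    (vanishingIdeal ℂ 3 V).IsPrime := by
  obtain ⟨⟨S, rfl⟩, ⟨x₀, hx₀⟩, hirr⟩ := hV
  refine Ideal.isPrime_iff.2 ⟨?_, fun {p q} hpq => ?_⟩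
  · rw [Ne, Ideal.eq_top_iff_one]
    intro h
    simpa using h x₀ hx₀
  · have hcut : ∀ p, IsAlgSet ℂ 3 ({x | ∀ r ∈ S, eval x r = 0} ∩ {x | eval x p = 0}) := by
      intro p
      refine ⟨insert p S, ?_⟩
      ext x
      simp [and_comm]
    have key : ∀ p, {x | ∀ r ∈ S, eval x r = 0} ∩ {x | eval x p = 0} =
        {x | ∀ r ∈ S, eval x r = 0} → p ∈ vanishingIdeal ℂ 3 {x | ∀ r ∈ S, eval x r = 0} :=
      fun p h x hx => (h.symm.subset hx).2
    refine (hirr _ _ (hcut p) (hcut q) ?_).imp (key p) (key q)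
    ext x
    refine ⟨fun hx => ?_, fun hx => hx.elim And.left And.left⟩
    have := hpq x hx
    rw [map_mul] at this
    exact (mul_eq_zero.1 this).imp (fun h => ⟨hx, h⟩) (fun h => ⟨hx, h⟩)

lemma subset_of_vanishingIdeal_le {V W : Set (Fin 3 → ℂ)} (hV : IsAlgSet ℂ 3 V)
    (h : vanishingIdeal ℂ 3 V ≤ vanishingIdeal ℂ 3 W) : W ⊆ V := by
  obtain ⟨S, rfl⟩ := hV
  intro x hx p hp
  exact h (fun y hy => hy p hp) x hx

/-- If all coordinates were algebraic modulo `P`, so would be the algebra they generate. -/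
lemma exists_transcendental_coord (P : Ideal (MvPolynomial (Fin 3) ℂ))
    (h : Algebra.trdeg ℂ (MvPolynomial (Fin 3) ℂ ⧸ P) = 1) :
    ∃ k : Fin 3, ∀ p : Polynomial ℂ, Polynomial.aeval (X k) p ∈ P → p = 0 := by
  by_contra hcon
  push Not at hcon
  have halg : ∀ k : Fin 3, IsIntegral ℂ (Ideal.Quotient.mkₐ ℂ P (X k)) := by
    intro k
    obtain ⟨p, hp, hp0⟩ := hcon k
    refine IsAlgebraic.isIntegral ⟨p, hp0, ?_⟩
    rw [Polynomial.aeval_algHom_apply]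
    exact Ideal.Quotient.eq_zero_iff_mem.2 hp
  have hall : Algebra.IsAlgebraic ℂ (MvPolynomial (Fin 3) ℂ ⧸ P) := by
    refine ⟨fun a => ?_⟩
    obtain ⟨a, rfl⟩ := Ideal.Quotient.mkₐ_surjective ℂ P a
    refine IsIntegral.isAlgebraic ?_
    have hle : (⊤ : Subalgebra ℂ (MvPolynomial (Fin 3) ℂ)) ≤
        (integralClosure ℂ (MvPolynomial (Fin 3) ℂ ⧸ P)).comap (Ideal.Quotient.mkₐ ℂ P) := by
      rw [← adjoin_range_X, Algebra.adjoin_le_iff]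
      rintro _ ⟨k, rfl⟩
      exact halg k
    exact hle (Algebra.mem_top (x := a))
  rw [trdeg_eq_zero] at h
  exact zero_ne_one h

/-- Nested ideals `P ≤ Q` with `P` prime coincide when `P` has dimension one and some `X k` is
transcendental modulo `Q`: an element of `Q` outside `P` would be algebraic over `ℂ[X k]` modulo
`P`, so that `Q` would contain a nonzero polynomial in `X k`. -/
lemma prime_le_of_le_of_trdeg_eq_one (P Q : Ideal (MvPolynomial (Fin 3) ℂ)) [P.IsPrime]
    (hPQ : P ≤ Q)
    (h : Algebra.trdeg ℂ (MvPolynomial (Fin 3) ℂ ⧸ P) = 1) (k : Fin 3)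
    (hk : ∀ p : Polynomial ℂ, Polynomial.aeval (X k) p ∈ Q → p = 0) : Q ≤ P := by
  intro q hq
  by_contra hqP
  let x : Unit → MvPolynomial (Fin 3) ℂ ⧸ P := fun _ => Ideal.Quotient.mkₐ ℂ P (X k)
  have hx : AlgebraicIndependent ℂ x := by
    rw [algebraicIndependent_unique_type_iff, transcendental_iff]
    intro p hp
    rw [Polynomial.aeval_algHom_apply] at hp
    exact hk p (hPQ (Ideal.Quotient.eq_zero_iff_mem.1 hp))
  have hb : IsTranscendenceBasis ℂ x :=
    hx.isTranscendenceBasis_of_lift_trdeg_le_of_finite (by rw [h]; simp)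
  have := hb.isAlgebraic
  refine Ideal.comap_ne_bot_of_algebraic_mem (R := Algebra.adjoin ℂ (Set.range x))
    (x := Ideal.Quotient.mk P q) (I := Q.map (Ideal.Quotient.mk P))
    (fun h0 => hqP (Ideal.Quotient.eq_zero_iff_mem.1 h0)) (Ideal.mem_map_of_mem _ hq)
    (Algebra.IsAlgebraic.isAlgebraic _) ?_
  rw [eq_bot_iff]
  rintro ⟨a, ha⟩ haQ
  have ha' := ha
  rw [Set.range_const, Algebra.adjoin_singleton_eq_range_aeval] at ha'
  obtain ⟨p, rfl⟩ := ha'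
  have hpQ : Polynomial.aeval (Ideal.Quotient.mkₐ ℂ P (X k)) p ∈ Q.map (Ideal.Quotient.mk P) := haQ
  rw [Polynomial.aeval_algHom_apply] at hpQ
  have hp := hk p ((Ideal.mem_quotient_iff_mem hPQ).1 hpQ)
  subst hp
  exact (Submodule.mem_bot _).2 (Subtype.ext (map_zero (Polynomial.aeval _)))

/-- If `f, g ∈ ℂ[x,y,z]` are nonconstant with no common nonconstant factor, then at
most `deg f · deg g` irreducible complex algebraic curves lie simultaneously in the
zero sets of `f` and `g`. -/
theorem common_curves_of_coprime_complex_polynomials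
    (f g : MvPolynomial (Fin 3) ℂ)
    (hf : f.totalDegree ≠ 0) (hg : g.totalDegree ≠ 0)
    (hcop : ¬ ∃ h : MvPolynomial (Fin 3) ℂ, h.totalDegree ≠ 0 ∧ h ∣ f ∧ h ∣ g) :
    {γ : Set (Fin 3 → ℂ) | IsIrredAlgCurve ℂ 3 γ ∧
        γ ⊆ {x | eval x f = 0} ∧ γ ⊆ {x | eval x g = 0}}.Finite ∧
      {γ : Set (Fin 3 → ℂ) | IsIrredAlgCurve ℂ 3 γ ∧
        γ ⊆ {x | eval x f = 0} ∧ γ ⊆ {x | eval x g = 0}}.ncard ≤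
          f.totalDegree * g.totalDegree := by
  have hf0 : f ≠ 0 := by rintro rfl; simp at hf
  have hg0 : g ≠ 0 := by rintro rfl; simp at hg
  have hr := isRelPrime_of_no_common_factor f g hf0 hcop
  set Γ := {γ : Set (Fin 3 → ℂ) | IsIrredAlgCurve ℂ 3 γ ∧
        γ ⊆ {x | eval x f = 0} ∧ γ ⊆ {x | eval x g = 0}} with hΓ
  -- Bounding all finite subsets gives finiteness and the cardinality bound together.
  have hbound : ∀ s : Finset (Set (Fin 3 → ℂ)), (s : Set (Set (Fin 3 → ℂ))) ⊆ Γ →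
      s.card ≤ f.totalDegree * g.totalDegree := by
    intro s hs
    have hs' : ∀ i : s, i.1 ∈ Γ := fun i => hs i.2
    have hdim : ∀ i : s,
        Algebra.trdeg ℂ (MvPolynomial (Fin 3) ℂ ⧸ vanishingIdeal ℂ 3 i.1) = 1 :=
      fun i => (hs' i).1.2
    have hP : ∀ i : s, (vanishingIdeal ℂ 3 i.1).IsPrime := fun i =>
      vanishingIdeal_isPrime (hs' i).1.1
    choose k hk using fun i : s => exists_transcendental_coord _ (hdim i)
    rw [← Fintype.card_coe]
    refine card_primes_le f g hg0 hr (fun i : s => vanishingIdeal ℂ 3 i.1) hP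
      (fun i x hx => (hs' i).2.1 hx) (fun i x hx => (hs' i).2.2 hx) (fun i j hij hle => hij ?_) k hk
    have := hP j
    have hge := prime_le_of_le_of_trdeg_eq_one _ _ hle (hdim j) (k i) (hk i)
    exact Subtype.ext (Set.Subset.antisymm
      (subset_of_vanishingIdeal_le (hs' j).1.1.1 hle)
      (subset_of_vanishingIdeal_le (hs' i).1.1.1 hge))
  have hfin : Γ.Finite := by
    by_contra hinf
    obtain ⟨s, hs, hcard⟩ :=
      Set.Infinite.exists_subset_card_eq hinf (f.totalDegree * g.totalDegree + 1)
    have := hbound s hs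
    omega
  refine ⟨hfin, ?_⟩
  rw [Set.ncard_eq_toFinset_card Γ hfin]
  exact hbound _ (by simp)
end
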